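/- arXiv:1410.7486 — 2 statements merged into one kernel-verified Lean document; each statement's English description precedes it below -/
import Mathlib

section
/- Let s ∈ (−d/2, d/2). There exists a constant C > 0, depending only on s, d and the Littlewood–Paley functions, such that for all Schwartz functions u and v on ℝ^d, ‖uv‖_{Ḣ^s} ≤ C ‖u‖_{Ḃ^{d/2}_{2,1}} ‖v‖_{Ḣ^s}. -/
open MeasureTheory SchwartzMap Real Complex
open scoped FourierTransform ENNReal NNReal

noncomputable section

/-- Euclidean space `ℝ^d`. -/
abbrev Ed (d : ℕ) := EuclideanSpace ℝ (Fin d)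

/-- A Littlewood–Paley pair `(χ, φ)` on `ℝ^d`: smooth functions with
`supp χ ⊆ {|ξ| ≤ 4/3}`, `supp φ ⊆ {3/4 ≤ |ξ| ≤ 8/3}`,
`χ(ξ) + ∑_{q ≥ 0} φ(2^{-q}ξ) = 1` for all `ξ`, and `∑_{q ∈ ℤ} φ(2^{-q}ξ) = 1` for `ξ ≠ 0`. -/
structure LPPair (d : ℕ) where
  χ : Ed d → ℝ
  φ : Ed d → ℝ
  smooth_χ : ContDiff ℝ (⊤ : ℕ∞) χ
  smooth_φ : ContDiff ℝ (⊤ : ℕ∞) φ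
  supp_χ : Function.support χ ⊆ {ξ : Ed d | ‖ξ‖ ≤ 4/3}
  supp_φ : Function.support φ ⊆ {ξ : Ed d | 3/4 ≤ ‖ξ‖ ∧ ‖ξ‖ ≤ 8/3}
  sum_one : ∀ ξ : Ed d, χ ξ + ∑' q : ℕ, φ ((2:ℝ) ^ (-(q:ℤ)) • ξ) = 1
  sum_one' : ∀ ξ : Ed d, ξ ≠ 0 → ∑' q : ℤ, φ ((2:ℝ) ^ (-q) • ξ) = 1

variable {d : ℕ}

/-- Homogeneous Littlewood–Paley block `Δ̇_q u = 𝓕⁻¹(φ(2^{-q}·) 𝓕u)`. -/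
def lpBlock (P : LPPair d) (q : ℤ) (u : Ed d → ℂ) : Ed d → ℂ :=
  𝓕⁻ (fun ξ => (P.φ ((2:ℝ) ^ (-q) • ξ) : ℂ) * 𝓕 u ξ)

/-- Low-frequency cut-off `Ṡ_q u = 𝓕⁻¹(χ(2^{-q}·) 𝓕u)`. -/
def sBlock (P : LPPair d) (q : ℤ) (u : Ed d → ℂ) : Ed d → ℂ :=
  𝓕⁻ (fun ξ => (P.χ ((2:ℝ) ^ (-q) • ξ) : ℂ) * 𝓕 u ξ)

/-- `ℓ^r(ℤ)`-norm of a family of extended nonnegative reals. -/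
def ellNorm (r : ℝ≥0∞) (a : ℤ → ℝ≥0∞) : ℝ≥0∞ :=
  if r = ∞ then ⨆ q, a q else (∑' q, a q ^ r.toReal) ^ (1 / r.toReal)

/-- Homogeneous Besov norm `‖u‖_{Ḃ^s_{p,r}}`. -/
def besovNorm (P : LPPair d) (s : ℝ) (p r : ℝ≥0∞) (u : Ed d → ℂ) : ℝ≥0∞ :=
  ellNorm r (fun q => (2:ℝ≥0∞) ^ ((q : ℝ) * s) * eLpNorm (lpBlock P q u) p volume)

/-- Homogeneous Sobolev norm `‖u‖_{Ḣ^s} = ‖ |ξ|^s 𝓕u(ξ) ‖_{L²_ξ}`. -/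
def sobNorm (s : ℝ) (u : Ed d → ℂ) : ℝ≥0∞ :=
  eLpNorm (fun ξ : Ed d => ‖ξ‖ ^ s * ‖𝓕 u ξ‖) 2 volume

/-- Hybrid Besov norm `‖u‖_{𝓑̇^s}`. -/
def hybridNorm (P : LPPair d) (s : ℝ) (u : Ed d → ℂ) : ℝ≥0∞ :=
  (∑' q : ℤ, if q < 0 then
      ((2:ℝ≥0∞) ^ ((q : ℝ) * s) * eLpNorm (lpBlock P q u) 2 volume) ^ (2:ℝ) else 0) ^ (1/2 : ℝ)
  + ∑' q : ℤ, if 0 ≤ q then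
      (2:ℝ≥0∞) ^ ((q : ℝ) * (d : ℝ) / 2) * eLpNorm (lpBlock P q u) 2 volume else 0

/-- High-frequency norm `‖u‖^h_{Ḃ^σ_{2,1}}`. -/
def highNorm (P : LPPair d) (σ : ℝ) (u : Ed d → ℂ) : ℝ≥0∞ :=
  ∑' q : ℤ, if 0 ≤ q then (2:ℝ≥0∞) ^ ((q : ℝ) * σ) * eLpNorm (lpBlock P q u) 2 volume else 0


namespace StmtAux

lemma cs_sq {α : Type*} [MeasurableSpace α] (μ : Measure α) {F G : α → ℝ≥0∞}
    (hF : AEMeasurable F μ) (hG : AEMeasurable G μ) :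
    (∫⁻ x, F x * G x ∂μ) ^ 2 ≤ (∫⁻ x, F x ^ 2 ∂μ) * ∫⁻ x, G x ^ 2 ∂μ := by
  have h := ENNReal.lintegral_mul_le_Lp_mul_Lq μ (Real.HolderConjugate.two_two) hF hG
  simp only [Pi.mul_apply, ENNReal.rpow_two] at h
  calc _ ≤ ((∫⁻ x, F x ^ 2 ∂μ) ^ (1 / (2:ℝ)) * (∫⁻ x, G x ^ 2 ∂μ) ^ (1 / (2:ℝ))) ^ 2 := by
        gcongr
    _ = _ := by
        rw [mul_pow, ← ENNReal.rpow_two, ← ENNReal.rpow_two, ← ENNReal.rpow_mul,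
          ← ENNReal.rpow_mul]
        norm_num

lemma add_sq_le_enn (a b : ℝ≥0∞) : (a + b) ^ 2 ≤ 4 * a ^ 2 + 4 * b ^ 2 := by
  rcases le_total a b with h | h
  · calc (a + b) ^ 2 ≤ (b + b) ^ 2 := by gcongr
      _ = 4 * b ^ 2 := by ring
      _ ≤ _ := le_add_self
  · calc (a + b) ^ 2 ≤ (a + a) ^ 2 := by gcongr
      _ = 4 * a ^ 2 := by ring
      _ ≤ _ := le_self_add

lemma eLpNorm_sq {α : Type*} [MeasurableSpace α] (μ : Measure α) {ε : Type*} [TopologicalSpace ε] [ContinuousENorm ε] (F : α → ε) :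
    eLpNorm F 2 μ = (∫⁻ x, ‖F x‖ₑ ^ 2 ∂μ) ^ (1 / (2:ℝ)) := by
  rw [eLpNorm_eq_lintegral_rpow_enorm_toReal (by norm_num) (by norm_num)]
  simp

lemma eLpNorm_tsum_le {α : Type*} [MeasurableSpace α] (μ : Measure α) (f : ℤ → α → ℝ≥0∞)
    (hf : ∀ q, Measurable (f q)) :
    eLpNorm (fun x => ∑' q, f q x) 2 μ ≤ ∑' q, eLpNorm (f q) 2 μ := by
  have key : ∫⁻ x, (∑' q, f q x) ^ 2 ∂μ
      = ⨆ s : Finset ℤ, ∫⁻ x, (∑ q ∈ s, f q x) ^ 2 ∂μ := by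
    rw [← lintegral_iSup_directed]
    · congr 1 with x
      rw [ENNReal.tsum_eq_iSup_sum]
      simp only [← ENNReal.rpow_two]
      exact (ENNReal.monotone_rpow_of_nonneg (by norm_num)).map_iSup_of_continuousAt
        (ENNReal.continuous_rpow_const.continuousAt) (by simp)
    · intro s
      fun_prop
    · apply Monotone.directed_le
      intro s t hst x
      dsimp only
      gcongr
  rw [eLpNorm_sq]
  simp only [enorm_eq_self]
  rw [key, one_div, ENNReal.rpow_inv_le_iff (by norm_num)]
  refine iSup_le fun s => ?_
  rw [← ENNReal.rpow_inv_le_iff (by norm_num)]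
  have h1 := eLpNorm_sum_le (μ := μ) (p := 2) (f := f) (s := s)
    (fun i _ => (hf i).aestronglyMeasurable) (by norm_num)
  rw [eLpNorm_sq] at h1
  simp only [enorm_eq_self, Finset.sum_apply, one_div] at h1
  exact h1.trans (ENNReal.sum_le_tsum s)

lemma fourier_mul_le {d : ℕ} (u v : 𝓢(Ed d, ℂ)) (ξ : Ed d) :
    ‖𝓕 (fun x => u x * v x) ξ‖ₑ ≤ ∫⁻ η, ‖𝓕 (⇑u) (ξ - η)‖ₑ * ‖𝓕 (⇑v) η‖ₑ := by
  have h1 : 𝓕 (fun x => u x * v x) ξ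
      = SchwartzMap.convolution (ContinuousLinearMap.mul ℂ ℂ) (𝓕⁻ u) (𝓕⁻ v) (-ξ) := by
    simp only [SchwartzMap.convolution]
    simp [SchwartzMap.fourierInv_coe, Real.fourierInv_eq_fourier_neg]
    rfl
  rw [h1, SchwartzMap.convolution_apply, MeasureTheory.convolution]
  refine (enorm_integral_le_lintegral_enorm _).trans ?_
  rw [← lintegral_add_right_eq_self _ (-ξ)]
  refine le_of_eq (lintegral_congr fun x => ?_)
  simp [SchwartzMap.fourierInv_coe, Real.fourierInv_eq_fourier_neg, enorm_mul, sub_eq_add_neg]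

lemma block_eq {d : ℕ} (P : LPPair d) (q : ℤ) (u : 𝓢(Ed d, ℂ)) :
    eLpNorm (lpBlock P q ⇑u) 2 volume =
      eLpNorm (fun ξ => (P.φ ((2:ℝ) ^ (-q) • ξ) : ℂ) * 𝓕 (⇑u) ξ) 2 volume := by
  have hc : HasCompactSupport (fun ξ => (P.φ ((2:ℝ) ^ (-q) • ξ) : ℂ) * 𝓕 (⇑u) ξ) := by
    apply HasCompactSupport.mul_right
    apply HasCompactSupport.of_support_subset_isCompact
      (isCompact_closedBall (0 : Ed d) ((2:ℝ)^q * (8/3)))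
    intro ξ hξ
    have : P.φ ((2:ℝ) ^ (-q) • ξ) ≠ 0 := by simpa using hξ
    have h2 := (P.supp_φ this).2
    rw [norm_smul, Real.norm_of_nonneg (by positivity), zpow_neg, inv_mul_le_iff₀ (by positivity)] at h2
    simpa using h2
  have hs : ContDiff ℝ (⊤ : ℕ∞) (fun ξ => (P.φ ((2:ℝ) ^ (-q) • ξ) : ℂ) * 𝓕 (⇑u) ξ) := by
    apply ContDiff.mul
    · exact Complex.ofRealCLM.contDiff.comp (P.smooth_φ.comp (contDiff_const_smul _))
    · rw [← SchwartzMap.fourier_coe]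
      exact (𝓕 u).smooth _
  let w : 𝓢(Ed d, ℂ) := hc.toSchwartzMap hs
  have hw : lpBlock P q ⇑u = ⇑(𝓕⁻ w : 𝓢(Ed d, ℂ)) := by
    rw [SchwartzMap.fourierInv_coe]; rfl
  have hw2 : (fun ξ => (P.φ ((2:ℝ) ^ (-q) • ξ) : ℂ) * 𝓕 (⇑u) ξ) = ⇑w := rfl
  rw [hw, hw2]
  have h := SchwartzMap.norm_fourier_toL2_eq (𝓕⁻ w)
  rw [FourierTransform.fourier_fourierInv_eq] at h
  rw [SchwartzMap.norm_toLp, SchwartzMap.norm_toLp] at h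
  exact ((ENNReal.toReal_eq_toReal_iff' (w.memLp 2 volume).2.ne ((𝓕⁻ w : 𝓢(Ed d, ℂ)).memLp 2 volume).2.ne).1 h).symm

lemma radial {d : ℕ} (hd : 1 ≤ d) (σ : ℝ) (hσ : σ < d) :
    ∃ C : ℝ≥0, ∀ ρ : ℝ, 0 < ρ →
      ∫⁻ x : Ed d in Metric.closedBall 0 ρ, ENNReal.ofReal (‖x‖ ^ (-σ))
        ≤ C * ENNReal.ofReal (ρ ^ ((d:ℝ) - σ)) := by
  have : Nonempty (Fin d) := ⟨⟨0, hd⟩⟩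
  have : Nontrivial (Ed d) := inferInstance
  refine ⟨Real.toNNReal (d * (volume.real (Metric.ball (0 : Ed d) 1) * ((d:ℝ) - σ)⁻¹)), fun ρ hρ => ?_⟩
  let f : ℝ → ℝ := (Set.Iic ρ).indicator (fun y => y ^ (-σ))
  have hcong : ∀ y ∈ Set.Ioi (0:ℝ), y ^ (d - 1) • f y
      = (Set.Iic ρ).indicator (fun y => y ^ ((d:ℝ) - 1 - σ)) y := by
    intro y hy
    have hy : 0 < y := hy
    by_cases h : y ≤ ρ
    · simp only [f, Set.indicator, Set.mem_Iic, h, if_true, smul_eq_mul]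
      rw [← Real.rpow_natCast, ← Real.rpow_add hy]
      congr 1
      push_cast [hd]; ring
    · simp [f, h]
  have hint : IntervalIntegrable (fun y : ℝ => y ^ ((d:ℝ) - 1 - σ)) volume 0 ρ :=
    intervalIntegral.intervalIntegrable_rpow' (by linarith)
  have hIoc : Set.Ioi (0:ℝ) ∩ Set.Iic ρ = Set.Ioc 0 ρ := rfl
  have hfi : Integrable (fun x : Ed d => f ‖x‖) volume := by
    rw [integrable_fun_norm_addHaar]
    rw [finrank_euclideanSpace_fin, integrableOn_congr_fun hcong measurableSet_Ioi]
    rw [IntegrableOn, integrable_indicator_iff measurableSet_Iic, IntegrableOn,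
      Measure.restrict_restrict measurableSet_Iic, Set.inter_comm, hIoc]
    exact (intervalIntegrable_iff_integrableOn_Ioc_of_le hρ.le).1 hint
  have hval : ∫ x : Ed d, f ‖x‖ = d * (volume.real (Metric.ball (0 : Ed d) 1) * ((d:ℝ) - σ)⁻¹)
      * ρ ^ ((d:ℝ) - σ) := by
    rw [integral_fun_norm_addHaar, finrank_euclideanSpace_fin,
      setIntegral_congr_fun measurableSet_Ioi hcong, setIntegral_indicator measurableSet_Iic,
      hIoc, ← intervalIntegral.integral_of_le hρ.le, integral_rpow (Or.inl (by linarith))]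
    have : (d:ℝ) - 1 - σ + 1 = d - σ := by ring
    rw [this, Real.zero_rpow (by linarith)]
    simp only [nsmul_eq_mul, smul_eq_mul, sub_zero]
    ring
  have hf0 : ∀ x : Ed d, 0 ≤ f ‖x‖ := by
    intro x
    apply Set.indicator_apply_nonneg
    intro _; positivity
  have hl : ∫⁻ x : Ed d in Metric.closedBall 0 ρ, ENNReal.ofReal (‖x‖ ^ (-σ))
      = ∫⁻ x : Ed d, ENNReal.ofReal (f ‖x‖) := by
    rw [← lintegral_indicator Metric.isClosed_closedBall.measurableSet]
    refine lintegral_congr fun x => ?_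
    by_cases h : ‖x‖ ≤ ρ <;> simp [f, h]
  rw [hl, ← ofReal_integral_eq_lintegral_ofReal hfi (Filter.Eventually.of_forall hf0), hval]
  have : 0 ≤ ((d:ℝ) - σ)⁻¹ := by
    rw [inv_nonneg]; linarith
  rw [ENNReal.ofReal_mul (by positivity)]
  rfl

/-- Young's inequality, `L¹ * L²`. -/
lemma young {d : ℕ} (f g : Ed d → ℝ≥0∞) (hf : Measurable f) (hg : Measurable g) :
    ∫⁻ ξ, (∫⁻ η, f (ξ - η) * g η) ^ 2 ≤ (∫⁻ x, f x) ^ 2 * ∫⁻ x, g x ^ 2 := by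
  have hpt : ∀ ξ, (∫⁻ η, f (ξ - η) * g η) ^ 2
      ≤ (∫⁻ x, f x) * ∫⁻ η, f (ξ - η) * g η ^ 2 := by
    intro ξ
    have h := cs_sq volume (F := fun η => f (ξ - η) ^ (1/2:ℝ))
      (G := fun η => f (ξ - η) ^ (1/2:ℝ) * g η) (by fun_prop) (by fun_prop)
    have e : ∀ a : ℝ≥0∞, a ^ (1/2:ℝ) * a ^ (1/2:ℝ) = a := by
      intro a
      rw [← ENNReal.rpow_add_of_nonneg _ _ (by norm_num) (by norm_num)]; norm_num
    simp only [← mul_assoc, e, mul_pow, sq (_ ^ (1/2:ℝ))] at h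
    refine h.trans (le_of_eq ?_)
    rw [lintegral_sub_left_eq_self f ξ]
  calc _ ≤ ∫⁻ ξ, (∫⁻ x, f x) * ∫⁻ η, f (ξ - η) * g η ^ 2 := lintegral_mono hpt
    _ = (∫⁻ x, f x) * ∫⁻ ξ, ∫⁻ η, f (ξ - η) * g η ^ 2 := by
        rw [lintegral_const_mul]
        apply Measurable.lintegral_prod_right'
          (f := fun p : Ed d × Ed d => f (p.1 - p.2) * g p.2 ^ 2)
        fun_prop
    _ = (∫⁻ x, f x) * ∫⁻ η, ∫⁻ ξ, f (ξ - η) * g η ^ 2 := by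
        rw [lintegral_lintegral_swap]
        fun_prop
    _ = (∫⁻ x, f x) * ∫⁻ η, (∫⁻ x, f x) * g η ^ 2 := by
        congr 1
        refine lintegral_congr fun η => ?_
        rw [lintegral_mul_const _ (by fun_prop), lintegral_sub_right_eq_self f η]
    _ = _ := by
        rw [lintegral_const_mul _ (by fun_prop), sq, mul_assoc]

/-- Hilbert--Schmidt bound. -/
lemma hs {d : ℕ} (B : Ed d → Ed d → ℝ≥0∞) (hB : Measurable (fun p : Ed d × Ed d => B p.1 p.2))
    (f g : Ed d → ℝ≥0∞) (hf : Measurable f) (hg : Measurable g) :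
    ∫⁻ ξ, (∫⁻ η, B ξ η * f (ξ - η) * g η) ^ 2
      ≤ (∫⁻ ξ, ∫⁻ η, B ξ η ^ 2 * f (ξ - η) ^ 2) * ∫⁻ x, g x ^ 2 := by
  rw [← lintegral_mul_const]
  · refine lintegral_mono fun ξ => ?_
    have hB' : Measurable (fun η => B ξ η) := hB.comp (measurable_prodMk_left (x := ξ))
    refine (cs_sq volume (by fun_prop) (by fun_prop)).trans (le_of_eq ?_)
    simp only [mul_pow]
  · apply Measurable.lintegral_prod_right'
          (f := fun p : Ed d × Ed d => B p.1 p.2 ^ 2 * f (p.1 - p.2) ^ 2)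
    fun_prop

lemma l1_le {d : ℕ} (hd : 1 ≤ d) : ∃ C : ℝ≥0, ∀ R : ℝ, 0 < R → ∀ f : Ed d → ℝ≥0∞,
    Measurable f → (∀ x, R < ‖x‖ → f x = 0) →
    (∫⁻ x, f x) ^ 2 ≤ C * ENNReal.ofReal (R ^ (d:ℝ)) * ∫⁻ x, f x ^ 2 := by
  obtain ⟨C, hC⟩ := radial hd 0 (by positivity)
  refine ⟨C, fun R hR f hf hfs => ?_⟩
  have h0 : ∫⁻ x, f x = ∫⁻ x, (Metric.closedBall (0 : Ed d) R).indicator 1 x * f x := by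
    refine lintegral_congr fun x => ?_
    by_cases h : ‖x‖ ≤ R
    · simp [h]
    · simp [hfs x (not_le.1 h)]
  rw [h0]
  refine (cs_sq volume ?_ (by fun_prop)).trans ?_
  · exact (measurable_const.indicator Metric.isClosed_closedBall.measurableSet).aemeasurable
  · gcongr
    have := hC R hR
    simp only [neg_zero, Real.rpow_zero, ENNReal.ofReal_one, sub_zero] at this
    refine le_trans (le_of_eq ?_) this
    rw [← lintegral_indicator Metric.isClosed_closedBall.measurableSet]
    refine lintegral_congr fun x => ?_
    by_cases h : ‖x‖ ≤ R <;> simp [h]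

/-- The kernel restricted to low frequencies. -/
def lowKer (d : ℕ) (s R : ℝ) (ξ η : Ed d) : ℝ≥0∞ :=
  (Metric.closedBall (0 : Ed d) (2 * R)).indicator (fun ξ => ENNReal.ofReal (‖ξ‖ ^ s)) ξ *
    (Metric.closedBall (0 : Ed d) (2 * R)).indicator (fun ξ => ENNReal.ofReal (‖ξ‖ ^ (-s))) η

lemma meas_ind {d : ℕ} (s R : ℝ) : Measurable ((Metric.closedBall (0 : Ed d) (2 * R)).indicator
    (fun ξ => ENNReal.ofReal (‖ξ‖ ^ s))) :=
  Measurable.indicator (by fun_prop) Metric.isClosed_closedBall.measurableSet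

lemma lowKer_meas (d : ℕ) (s R : ℝ) :
    Measurable (fun p : Ed d × Ed d => lowKer d s R p.1 p.2) :=
  ((meas_ind s R).comp measurable_fst).mul ((meas_ind (-s) R).comp measurable_snd)

lemma ind_le {d : ℕ} (s R : ℝ) (hs : 0 ≤ s) (hR : 0 < R) (ξ : Ed d) :
    (Metric.closedBall (0 : Ed d) (2 * R)).indicator (fun ξ => ENNReal.ofReal (‖ξ‖ ^ s)) ξ
      ≤ ENNReal.ofReal ((2 * R) ^ s) := by
  by_cases h : ‖ξ‖ ≤ 2 * R
  · simp only [Set.indicator, Metric.mem_closedBall, dist_zero_right, h, if_true]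
    gcongr
  · simp [h]

lemma ind_sq {d : ℕ} (hd : 1 ≤ d) (s : ℝ) (hs : s < d / 2) : ∃ C : ℝ≥0, ∀ R : ℝ, 0 < R →
    ∫⁻ x : Ed d, ((Metric.closedBall (0 : Ed d) (2 * R)).indicator
      (fun ξ => ENNReal.ofReal (‖ξ‖ ^ (-s))) x) ^ 2
      ≤ C * ENNReal.ofReal ((2 * R) ^ (d - 2 * s)) := by
  obtain ⟨C, hC⟩ := radial hd (2 * s) (by linarith)
  refine ⟨C, fun R hR => le_trans (le_of_eq ?_) (hC (2 * R) (by positivity))⟩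
  rw [← lintegral_indicator Metric.isClosed_closedBall.measurableSet]
  refine lintegral_congr fun x => ?_
  by_cases h : ‖x‖ ≤ 2 * R
  · simp only [Set.indicator, Metric.mem_closedBall, dist_zero_right, h, if_true]
    rw [← ENNReal.ofReal_pow (by positivity), ← Real.rpow_natCast, ← Real.rpow_mul (by positivity)]
    congr 2
    push_cast; ring
  · simp [h]

lemma rpow_comb (R s : ℝ) (d : ℕ) (hR : 0 < R) :
    ENNReal.ofReal ((2 * R) ^ s) ^ 2 * ENNReal.ofReal ((2 * R) ^ (d - 2 * s))
      = ENNReal.ofReal (2 ^ (d:ℝ)) * ENNReal.ofReal (R ^ (d:ℝ)) := by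
  rw [← ENNReal.ofReal_pow (by positivity), ← ENNReal.ofReal_mul (by positivity),
    ← ENNReal.ofReal_mul (by positivity), ← Real.rpow_natCast, ← Real.rpow_mul (by positivity),
    ← Real.rpow_add (by positivity), ← Real.mul_rpow (by positivity) (by positivity)]
  congr 2
  push_cast; ring

lemma low_hs {d : ℕ} (hd : 1 ≤ d) (s : ℝ) (hs1 : -((d : ℝ)/2) < s) (hs2 : s < (d : ℝ)/2) :
    ∃ C : ℝ≥0, ∀ R : ℝ, 0 < R → ∀ f : Ed d → ℝ≥0∞, Measurable f →
      ∫⁻ ξ, ∫⁻ η, lowKer d s R ξ η ^ 2 * f (ξ - η) ^ 2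
        ≤ C * ENNReal.ofReal (R ^ (d:ℝ)) * ∫⁻ x, f x ^ 2 := by
  rcases le_total 0 s with h | h
  · obtain ⟨C, hC⟩ := ind_sq hd s hs2
    refine ⟨C * Real.toNNReal (2 ^ (d:ℝ)), fun R hR f hf => ?_⟩
    have hm := meas_ind (d := d) (-s) R
    calc _ ≤ ∫⁻ ξ, ∫⁻ η, ENNReal.ofReal ((2 * R) ^ s) ^ 2 *
          ((Metric.closedBall (0 : Ed d) (2 * R)).indicator
            (fun ξ => ENNReal.ofReal (‖ξ‖ ^ (-s))) η) ^ 2 * f (ξ - η) ^ 2 := by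
          refine lintegral_mono fun ξ => lintegral_mono fun η => ?_
          simp only [lowKer, mul_pow]
          gcongr
          exact ind_le s R h hR ξ
      _ = ∫⁻ η, ∫⁻ ξ, ENNReal.ofReal ((2 * R) ^ s) ^ 2 *
          ((Metric.closedBall (0 : Ed d) (2 * R)).indicator
            (fun ξ => ENNReal.ofReal (‖ξ‖ ^ (-s))) η) ^ 2 * f (ξ - η) ^ 2 := by
          rw [lintegral_lintegral_swap]
          fun_prop
      _ = ∫⁻ η, ENNReal.ofReal ((2 * R) ^ s) ^ 2 *
          ((Metric.closedBall (0 : Ed d) (2 * R)).indicator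
            (fun ξ => ENNReal.ofReal (‖ξ‖ ^ (-s))) η) ^ 2 * ∫⁻ x, f x ^ 2 := by
          refine lintegral_congr fun η => ?_
          rw [lintegral_const_mul _ (by fun_prop),
            lintegral_sub_right_eq_self (fun x => f x ^ 2) η]
      _ = ENNReal.ofReal ((2 * R) ^ s) ^ 2 * (∫⁻ η,
          ((Metric.closedBall (0 : Ed d) (2 * R)).indicator
            (fun ξ => ENNReal.ofReal (‖ξ‖ ^ (-s))) η) ^ 2) * ∫⁻ x, f x ^ 2 := by
          rw [lintegral_mul_const _ (by fun_prop), lintegral_const_mul _ (by fun_prop)]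
      _ ≤ ENNReal.ofReal ((2 * R) ^ s) ^ 2 * (C * ENNReal.ofReal ((2 * R) ^ (d - 2 * s)))
            * ∫⁻ x, f x ^ 2 := by
          gcongr
          exact hC R hR
      _ = C * (ENNReal.ofReal ((2 * R) ^ s) ^ 2 * ENNReal.ofReal ((2 * R) ^ (d - 2 * s)))
            * ∫⁻ x, f x ^ 2 := by ring
      _ = _ := by
          rw [rpow_comb R s d hR]
          simp only [ENNReal.coe_mul, ENNReal.ofReal]
          ring
  · obtain ⟨C, hC⟩ := ind_sq hd (-s) (by linarith)
    simp only [neg_neg] at hC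
    refine ⟨C * Real.toNNReal (2 ^ (d:ℝ)), fun R hR f hf => ?_⟩
    have hm := meas_ind (d := d) s R
    calc _ ≤ ∫⁻ ξ, ∫⁻ η, ENNReal.ofReal ((2 * R) ^ (-s)) ^ 2 *
          ((Metric.closedBall (0 : Ed d) (2 * R)).indicator
            (fun ξ => ENNReal.ofReal (‖ξ‖ ^ s)) ξ) ^ 2 * f (ξ - η) ^ 2 := by
          refine lintegral_mono fun ξ => lintegral_mono fun η => ?_
          simp only [lowKer, mul_pow]
          rw [mul_comm (ENNReal.ofReal _ ^ 2)]
          gcongr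
          exact ind_le (-s) R (by linarith) hR η
      _ = ∫⁻ ξ, ENNReal.ofReal ((2 * R) ^ (-s)) ^ 2 *
          ((Metric.closedBall (0 : Ed d) (2 * R)).indicator
            (fun ξ => ENNReal.ofReal (‖ξ‖ ^ s)) ξ) ^ 2 * ∫⁻ x, f x ^ 2 := by
          refine lintegral_congr fun ξ => ?_
          rw [lintegral_const_mul _ (by fun_prop),
            lintegral_sub_left_eq_self (fun x => f x ^ 2) ξ]
      _ = ENNReal.ofReal ((2 * R) ^ (-s)) ^ 2 * (∫⁻ η,
          ((Metric.closedBall (0 : Ed d) (2 * R)).indicator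
            (fun ξ => ENNReal.ofReal (‖ξ‖ ^ s)) η) ^ 2) * ∫⁻ x, f x ^ 2 := by
          rw [lintegral_mul_const _ (by fun_prop), lintegral_const_mul _ (by fun_prop)]
      _ ≤ ENNReal.ofReal ((2 * R) ^ (-s)) ^ 2 *
            (C * ENNReal.ofReal ((2 * R) ^ (d - 2 * (-s)))) * ∫⁻ x, f x ^ 2 := by
          gcongr
          exact hC R hR
      _ = C * (ENNReal.ofReal ((2 * R) ^ (-s)) ^ 2 *
            ENNReal.ofReal ((2 * R) ^ (d - 2 * (-s)))) * ∫⁻ x, f x ^ 2 := by ring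
      _ = _ := by
          rw [rpow_comb R (-s) d hR]
          simp only [ENNReal.coe_mul, ENNReal.ofReal]
          ring

lemma ratio_le (s x y : ℝ) (hx : 0 < x) (hy : 0 < y) (hxy : x ≤ 2 * y) (hyx : y ≤ 2 * x) :
    x ^ s * y ^ (-s) ≤ 2 ^ |s| := by
  rcases le_total 0 s with h | h
  · rw [abs_of_nonneg h, Real.rpow_neg hy.le, ← div_eq_mul_inv, ← Real.div_rpow hx.le hy.le]
    have : x / y ≤ 2 := by rw [div_le_iff₀ hy]; exact hxy
    gcongr
  · rw [abs_of_nonpos h]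
    have e : x ^ s * y ^ (-s) = (y / x) ^ (-s) := by
      rw [Real.div_rpow hy.le hx.le, Real.rpow_neg hx.le, div_inv_eq_mul, mul_comm]
    rw [e]
    have h2 : y / x ≤ 2 := by rw [div_le_iff₀ hx]; exact hyx
    have h3 : 0 ≤ -s := by linarith
    gcongr

lemma ker_le {d : ℕ} (s R : ℝ) (hR : 0 < R) (f : Ed d → ℝ≥0∞)
    (hfs : ∀ x, R < ‖x‖ → f x = 0) (ξ η : Ed d) :
    ENNReal.ofReal (‖ξ‖ ^ s) * ENNReal.ofReal (‖η‖ ^ (-s)) * f (ξ - η)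
      ≤ ENNReal.ofReal (2 ^ |s|) * f (ξ - η) + lowKer d s R ξ η * f (ξ - η) := by
  by_cases h0 : R < ‖ξ - η‖
  · simp [hfs _ h0]
  rw [not_lt] at h0
  by_cases h : ‖ξ‖ ≤ 2 * R ∧ ‖η‖ ≤ 2 * R
  · refine le_trans (le_of_eq ?_) le_add_self
    simp [lowKer, h.1, h.2]
  · refine le_trans ?_ le_self_add
    gcongr
    rw [← ENNReal.ofReal_mul (by positivity)]
    apply ENNReal.ofReal_le_ofReal
    have h1 := norm_sub_norm_le ξ η
    have h2 := norm_sub_norm_le η ξ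
    rw [norm_sub_rev] at h2
    have h3 : 2 * R < ‖ξ‖ ∨ 2 * R < ‖η‖ := by
      by_contra! hc
      exact h hc
    apply ratio_le <;> rcases h3 with h3 | h3 <;> linarith

lemma core {d : ℕ} (hd : 1 ≤ d) (s : ℝ) (hs1 : -((d : ℝ)/2) < s) (hs2 : s < (d : ℝ)/2) :
    ∃ C : ℝ≥0, ∀ R : ℝ, 0 < R → ∀ f g : Ed d → ℝ≥0∞, Measurable f → Measurable g →
      (∀ x, R < ‖x‖ → f x = 0) →
      ∫⁻ ξ, (∫⁻ η, ENNReal.ofReal (‖ξ‖ ^ s) * ENNReal.ofReal (‖η‖ ^ (-s)) * f (ξ - η) * g η) ^ 2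
        ≤ C * ENNReal.ofReal (R ^ (d:ℝ)) * (∫⁻ x, f x ^ 2) * ∫⁻ x, g x ^ 2 := by
  obtain ⟨C1, hC1⟩ := l1_le hd
  obtain ⟨C2, hC2⟩ := low_hs hd s hs1 hs2
  refine ⟨4 * Real.toNNReal (2 ^ |s|) ^ 2 * C1 + 4 * C2, fun R hR f g hf hg hfs => ?_⟩
  have hL := lowKer_meas d s R
  set M := ENNReal.ofReal (2 ^ |s|) with hM
  have hmA : Measurable (fun ξ => ∫⁻ η, f (ξ - η) * g η) := by
    apply Measurable.lintegral_prod_right' (f := fun p : Ed d × Ed d => f (p.1 - p.2) * g p.2)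
    fun_prop
  have hpt : ∀ ξ : Ed d, (∫⁻ η, ENNReal.ofReal (‖ξ‖ ^ s) * ENNReal.ofReal (‖η‖ ^ (-s))
        * f (ξ - η) * g η) ^ 2
      ≤ 4 * M ^ 2 * (∫⁻ η, f (ξ - η) * g η) ^ 2
        + 4 * (∫⁻ η, lowKer d s R ξ η * f (ξ - η) * g η) ^ 2 := by
    intro ξ
    have h1 : ∫⁻ η, ENNReal.ofReal (‖ξ‖ ^ s) * ENNReal.ofReal (‖η‖ ^ (-s)) * f (ξ - η) * g η
        ≤ M * (∫⁻ η, f (ξ - η) * g η) + ∫⁻ η, lowKer d s R ξ η * f (ξ - η) * g η := by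
      rw [← lintegral_const_mul _ (by fun_prop), ← lintegral_add_left (by fun_prop)]
      refine lintegral_mono fun η => ?_
      have := mul_le_mul_left (ker_le s R hR f hfs ξ η) (g η)
      rw [add_mul] at this
      simpa only [mul_assoc] using this
    calc _ ≤ (M * (∫⁻ η, f (ξ - η) * g η) + ∫⁻ η, lowKer d s R ξ η * f (ξ - η) * g η) ^ 2 := by
          gcongr
      _ ≤ _ := add_sq_le_enn _ _
      _ = _ := by ring
  calc _ ≤ ∫⁻ ξ, (4 * M ^ 2 * (∫⁻ η, f (ξ - η) * g η) ^ 2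
        + 4 * (∫⁻ η, lowKer d s R ξ η * f (ξ - η) * g η) ^ 2) := lintegral_mono hpt
    _ = 4 * M ^ 2 * (∫⁻ ξ, (∫⁻ η, f (ξ - η) * g η) ^ 2)
        + 4 * ∫⁻ ξ, (∫⁻ η, lowKer d s R ξ η * f (ξ - η) * g η) ^ 2 := by
        rw [lintegral_add_left (by fun_prop), lintegral_const_mul _ (by fun_prop),
          lintegral_const_mul' _ _ (by norm_num)]
    _ ≤ 4 * M ^ 2 * ((C1 * ENNReal.ofReal (R ^ (d:ℝ)) * ∫⁻ x, f x ^ 2) * ∫⁻ x, g x ^ 2)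
        + 4 * ((C2 * ENNReal.ofReal (R ^ (d:ℝ)) * ∫⁻ x, f x ^ 2) * ∫⁻ x, g x ^ 2) := by
        gcongr
        · refine (young f g hf hg).trans ?_
          gcongr
          exact hC1 R hR f hf hfs
        · refine (hs _ hL f g hf hg).trans ?_
          gcongr
          exact hC2 R hR f hf
    _ = _ := by
        rw [hM]
        simp only [ENNReal.ofReal]
        push_cast
        ring

/-- The operator with kernel `|ξ|^s |η|^(-s) f(ξ - η)`. -/
def opT {d : ℕ} (s : ℝ) (f g : Ed d → ℝ≥0∞) (ξ : Ed d) : ℝ≥0∞ :=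
  ∫⁻ η, ENNReal.ofReal (‖ξ‖ ^ s) * ENNReal.ofReal (‖η‖ ^ (-s)) * f (ξ - η) * g η

lemma opT_meas {d : ℕ} (s : ℝ) (f g : Ed d → ℝ≥0∞) (hf : Measurable f) (hg : Measurable g) :
    Measurable (opT s f g) := by
  unfold opT
  apply Measurable.lintegral_prod_right' (f := fun p : Ed d × Ed d =>
    ENNReal.ofReal (‖p.1‖ ^ s) * ENNReal.ofReal (‖p.2‖ ^ (-s)) * f (p.1 - p.2) * g p.2)
  fun_prop

lemma opT_bound {d : ℕ} (hd : 1 ≤ d) (s : ℝ) (hs1 : -((d : ℝ)/2) < s) (hs2 : s < (d : ℝ)/2) :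
    ∃ C : ℝ≥0, ∀ q : ℤ, ∀ f g : Ed d → ℝ≥0∞, Measurable f → Measurable g →
      (∀ x, (2:ℝ) ^ q * (8/3) < ‖x‖ → f x = 0) →
      eLpNorm (opT s f g) 2 volume ≤ C * ((2:ℝ≥0∞) ^ ((q:ℝ) * ((d:ℝ)/2)) * eLpNorm f 2 volume)
        * eLpNorm g 2 volume := by
  obtain ⟨C, hC⟩ := core hd s hs1 hs2
  refine ⟨(C * Real.toNNReal ((8/3) ^ (d:ℝ))) ^ (1/(2:ℝ)), fun q f g hf hg hfs => ?_⟩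
  have h := hC _ (by positivity) f g hf hg hfs
  have hR : ENNReal.ofReal (((2:ℝ) ^ q * (8/3)) ^ (d:ℝ))
      = ENNReal.ofReal ((8/3) ^ (d:ℝ)) * (2:ℝ≥0∞) ^ ((q:ℝ) * d) := by
    rw [Real.mul_rpow (by positivity) (by positivity), mul_comm, ENNReal.ofReal_mul (by positivity)]
    congr 1
    rw [← Real.rpow_intCast, ← Real.rpow_mul (by norm_num),
      ← ENNReal.ofReal_rpow_of_pos (by norm_num)]
    simp
  rw [eLpNorm_sq, eLpNorm_sq, eLpNorm_sq]
  simp only [enorm_eq_self]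
  refine (ENNReal.rpow_le_rpow h (by norm_num : (0:ℝ) ≤ 1/2)).trans (le_of_eq ?_)
  rw [ENNReal.mul_rpow_of_nonneg _ _ (by norm_num), ENNReal.mul_rpow_of_nonneg _ _ (by norm_num),
    hR, ← mul_assoc, ENNReal.mul_rpow_of_nonneg _ _ (by norm_num), ← ENNReal.rpow_mul,
    ENNReal.coe_rpow_of_nonneg _ (by norm_num : (0:ℝ) ≤ 1/2), ENNReal.coe_mul]
  simp only [ENNReal.ofReal, mul_assoc]
  congr 4
  ring

lemma pointwise {d : ℕ} (hd : 1 ≤ d) (P : LPPair d) (s : ℝ) (u v : 𝓢(Ed d, ℂ)) (ξ : Ed d) :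
    ‖‖ξ‖ ^ s * ‖𝓕 (fun x => u x * v x) ξ‖‖ₑ ≤
      ∑' q : ℤ, opT s (fun x => ‖(P.φ ((2:ℝ) ^ (-q) • x) : ℂ) * 𝓕 (⇑u) x‖ₑ)
        (fun η => ‖‖η‖ ^ s * ‖𝓕 (⇑v) η‖‖ₑ) ξ := by
  have : Nonempty (Fin d) := ⟨⟨0, hd⟩⟩
  have hcu : Continuous (𝓕 (⇑u)) := by
    rw [← SchwartzMap.fourier_coe]; exact (𝓕 u).continuous
  have hcv : Continuous (𝓕 (⇑v)) := by
    rw [← SchwartzMap.fourier_coe]; exact (𝓕 v).continuous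
  have hcφ : Continuous P.φ := P.smooth_φ.continuous
  have ha : ∀ η : Ed d, ‖‖η‖ ^ s‖ₑ = ENNReal.ofReal (‖η‖ ^ s) := fun η =>
    Real.enorm_of_nonneg (by positivity)
  simp only [opT, enorm_mul, enorm_norm, ha]
  have hm : Measurable (fun η => 𝓕 (⇑u) (ξ - η)) := by fun_prop
  rw [← lintegral_tsum]
  · calc _ ≤ ENNReal.ofReal (‖ξ‖ ^ s) * ∫⁻ η, ‖𝓕 (⇑u) (ξ - η)‖ₑ * ‖𝓕 (⇑v) η‖ₑ := by
          gcongr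
          exact fourier_mul_le u v ξ
      _ = ∫⁻ η, ENNReal.ofReal (‖ξ‖ ^ s) * (‖𝓕 (⇑u) (ξ - η)‖ₑ * ‖𝓕 (⇑v) η‖ₑ) := by
          rw [lintegral_const_mul]
          fun_prop
      _ ≤ _ := by
          refine lintegral_mono_ae ?_
          filter_upwards [Measure.ae_ne volume (0 : Ed d), Measure.ae_ne volume ξ] with η h0 h1
          have hsum : ‖𝓕 (⇑u) (ξ - η)‖ₑ ≤ ∑' q : ℤ, ‖(P.φ ((2:ℝ) ^ (-q) • (ξ - η)) : ℂ)‖ₑ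
              * ‖𝓕 (⇑u) (ξ - η)‖ₑ := by
            rw [ENNReal.tsum_mul_right]
            have h2 := P.sum_one' (ξ - η) (sub_ne_zero.2 h1.symm)
            have h3 : (1 : ℝ≥0∞) ≤ ∑' q : ℤ, ‖(P.φ ((2:ℝ) ^ (-q) • (ξ - η)) : ℂ)‖ₑ := by
              have h4 := enorm_tsum_le_tsum_enorm
                (f := fun q : ℤ => P.φ ((2:ℝ) ^ (-q) • (ξ - η)))
              rw [h2] at h4
              refine le_trans (by simp) (h4.trans (le_of_eq ?_))
              refine tsum_congr fun q => ?_
              rw [← enorm_norm (_ : ℂ), Complex.norm_real, enorm_norm]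
            exact le_mul_of_one_le_left (by simp) h3
          have hv : ENNReal.ofReal (‖η‖ ^ (-s)) * ENNReal.ofReal (‖η‖ ^ s) = 1 := by
            rw [← ENNReal.ofReal_mul (by positivity), ← Real.rpow_add (norm_pos_iff.2 h0)]
            simp
          calc _ ≤ ENNReal.ofReal (‖ξ‖ ^ s) * ((∑' q : ℤ,
                ‖(P.φ ((2:ℝ) ^ (-q) • (ξ - η)) : ℂ)‖ₑ * ‖𝓕 (⇑u) (ξ - η)‖ₑ) * ‖𝓕 (⇑v) η‖ₑ) := by
                gcongr
            _ = ENNReal.ofReal (‖ξ‖ ^ s) * (ENNReal.ofReal (‖η‖ ^ (-s))) * (∑' q : ℤ,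
                ‖(P.φ ((2:ℝ) ^ (-q) • (ξ - η)) : ℂ)‖ₑ * ‖𝓕 (⇑u) (ξ - η)‖ₑ)
                  * (ENNReal.ofReal (‖η‖ ^ s) * ‖𝓕 (⇑v) η‖ₑ) := by
                rw [mul_assoc, mul_assoc, mul_left_comm (ENNReal.ofReal (‖η‖ ^ (-s))),
                  ← mul_assoc (ENNReal.ofReal (‖η‖ ^ (-s))), hv, one_mul]
            _ ≤ _ := by
                rw [← ENNReal.tsum_mul_left, ← ENNReal.tsum_mul_right]
  · intro q
    fun_prop

end StmtAux

open StmtAux in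
/-- for `s ∈ (−d/2, d/2)`, `‖uv‖_{Ḣ^s} ≤ C‖u‖_{Ḃ^{d/2}_{2,1}}‖v‖_{Ḣ^s}`. -/
theorem stmt8 {d : ℕ} (hd : 1 ≤ d) (P : LPPair d) (s : ℝ)
    (hs1 : -((d : ℝ)/2) < s) (hs2 : s < (d : ℝ)/2) :
    ∃ C : ℝ≥0, 0 < C ∧ ∀ u v : 𝓢(Ed d, ℂ),
      sobNorm s (fun x => u x * v x)
        ≤ C * besovNorm P ((d : ℝ)/2) 2 1 ⇑u * sobNorm s ⇑v := by
  obtain ⟨C, hC⟩ := opT_bound hd s hs1 hs2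
  refine ⟨C + 1, by positivity, fun u v => ?_⟩
  have hcu : Continuous (𝓕 (⇑u)) := by
    rw [← SchwartzMap.fourier_coe]; exact (𝓕 u).continuous
  have hcv : Continuous (𝓕 (⇑v)) := by
    rw [← SchwartzMap.fourier_coe]; exact (𝓕 v).continuous
  have hcφ : Continuous P.φ := P.smooth_φ.continuous
  set f : ℤ → Ed d → ℝ≥0∞ := fun q x => ‖(P.φ ((2:ℝ) ^ (-q) • x) : ℂ) * 𝓕 (⇑u) x‖ₑ with hf
  set g : Ed d → ℝ≥0∞ := fun η => ‖‖η‖ ^ s * ‖𝓕 (⇑v) η‖‖ₑ with hg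
  have hfm : ∀ q, Measurable (f q) := by
    intro q; simp only [hf]; fun_prop
  have hgm : Measurable g := by
    simp only [hg]; fun_prop
  have hgn : eLpNorm g 2 volume = sobNorm s ⇑v := by
    rw [sobNorm, hg]
    exact eLpNorm_enorm _
  have hfn : ∀ q, eLpNorm (f q) 2 volume = eLpNorm (lpBlock P q ⇑u) 2 volume := by
    intro q
    rw [block_eq]
    exact eLpNorm_enorm _
  have hfs : ∀ q x, (2:ℝ) ^ q * (8/3) < ‖x‖ → f q x = 0 := by
    intro q x hx
    have : P.φ ((2:ℝ) ^ (-q) • x) = 0 := by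
      by_contra hne
      have h2 := (P.supp_φ hne).2
      rw [norm_smul, Real.norm_of_nonneg (by positivity), zpow_neg,
        inv_mul_le_iff₀ (by positivity)] at h2
      linarith
    simp only [hf, this]
    simp
  have hB : besovNorm P ((d : ℝ)/2) 2 1 ⇑u
      = ∑' q : ℤ, (2:ℝ≥0∞) ^ ((q : ℝ) * ((d:ℝ)/2)) * eLpNorm (lpBlock P q ⇑u) 2 volume := by
    simp [besovNorm, ellNorm]
  calc sobNorm s (fun x => u x * v x)
      ≤ eLpNorm (fun ξ => ∑' q : ℤ, opT s (f q) g ξ) 2 volume := by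
        rw [sobNorm]
        refine eLpNorm_mono_enorm fun ξ => ?_
        exact pointwise hd P s u v ξ
    _ ≤ ∑' q : ℤ, eLpNorm (opT s (f q) g) 2 volume :=
        eLpNorm_tsum_le _ _ fun q => opT_meas s _ _ (hfm q) hgm
    _ ≤ ∑' q : ℤ, C * ((2:ℝ≥0∞) ^ ((q:ℝ) * ((d:ℝ)/2)) * eLpNorm (lpBlock P q ⇑u) 2 volume)
          * sobNorm s ⇑v := by
        refine ENNReal.tsum_le_tsum fun q => ?_
        have := hC q (f q) g (hfm q) hgm (hfs q)
        rwa [hfn, hgn] at this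
    _ = C * besovNorm P ((d : ℝ)/2) 2 1 ⇑u * sobNorm s ⇑v := by
        rw [ENNReal.tsum_mul_right, ENNReal.tsum_mul_left, hB]
    _ ≤ _ := by
        gcongr
        simp
end
end

section
/- Let s ∈ (−d/2, d/2 − 1). There exists a constant C > 0, depending only on s, d and the Littlewood–Paley functions, such that for all Schwartz functions u and v on ℝ^d, ‖uv‖_{Ḣ^s} ≤ C ‖u‖_{Ḣ^{s+1}} ‖v‖_{Ḃ^{d/2−1}_{2,∞}}. -/
open MeasureTheory SchwartzMap Real Complex
open scoped FourierTransform ENNReal NNReal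

noncomputable section

variable {d : ℕ}

lemma fourier_mul_le {d : ℕ} (u v : 𝓢(Ed d, ℂ)) (ξ : Ed d) :
    ‖𝓕 (fun x => u x * v x) ξ‖ₑ ≤ ∫⁻ ζ, ‖𝓕 (u : Ed d → ℂ) ζ‖ₑ * ‖𝓕 (v : Ed d → ℂ) (ξ - ζ)‖ₑ := by
  have hff : ∀ (w : 𝓢(Ed d, ℂ)) (x : Ed d), 𝓕 (𝓕 w) x = w (-x) := by
    intro w x
    have h1 : 𝓕⁻ (𝓕 w) (-x) = w (-x) := by simp
    rw [← h1, SchwartzMap.fourierInv_coe, SchwartzMap.fourier_coe, Real.fourierInv_eq_fourier_neg,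
      neg_neg]
  have h : 𝓕 (fun x => u x * v x) ξ
      = SchwartzMap.convolution (ContinuousLinearMap.mul ℂ ℂ) (𝓕 u) (𝓕 v) ξ := by
    have : SchwartzMap.convolution (ContinuousLinearMap.mul ℂ ℂ) (𝓕 u) (𝓕 v)
      = 𝓕⁻ (SchwartzMap.pairing (ContinuousLinearMap.mul ℂ ℂ) (𝓕 (𝓕 u)) (𝓕 (𝓕 v))) := rfl
    rw [this, SchwartzMap.fourierInv_coe, Real.fourierInv_eq_fourier_comp_neg]
    refine congrFun (congrArg _ ?_) ξ
    ext x
    simp [SchwartzMap.pairing_apply_apply, hff]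
  rw [h, SchwartzMap.convolution_apply]
  unfold MeasureTheory.convolution
  refine (enorm_integral_le_lintegral_enorm _).trans (le_of_eq ?_)
  congr 1
  ext ζ
  simp [SchwartzMap.fourier_coe]

lemma plancherel_inv {d : ℕ} (w : 𝓢(Ed d, ℂ)) :
    eLpNorm (𝓕⁻ (w : Ed d → ℂ)) 2 volume = eLpNorm w 2 volume := by
  have h := SchwartzMap.norm_fourier_toL2_eq (𝓕⁻ w)
  simp only [FourierTransform.fourier_fourierInv_eq] at h
  rw [SchwartzMap.norm_toLp, SchwartzMap.norm_toLp,
    ENNReal.toReal_eq_toReal_iff' (SchwartzMap.memLp _ _ _).2.ne (SchwartzMap.memLp _ _ _).2.ne] at h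
  rw [h, SchwartzMap.fourierInv_coe]

lemma sq_eLpNorm {d : ℕ} {F : Type*} [NormedAddCommGroup F] (f : Ed d → F) :
    eLpNorm f 2 volume ^ 2 = ∫⁻ ξ, ‖f ξ‖ₑ ^ 2 := by
  have := eLpNorm_nnreal_pow_eq_lintegral (p := 2) (μ := volume) (f := f) (by norm_num)
  simpa using this

lemma lpBlock_sq {d : ℕ} (P : LPPair d) (q : ℤ) (v : 𝓢(Ed d, ℂ)) :
    eLpNorm (lpBlock P q v) 2 volume ^ 2
      = ∫⁻ ξ, (‖P.φ ((2:ℝ) ^ (-q) • ξ)‖ₑ * ‖𝓕 (v : Ed d → ℂ) ξ‖ₑ) ^ 2 := by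
  have hc : HasCompactSupport (fun ξ : Ed d => (P.φ ((2:ℝ) ^ (-q) • ξ) : ℂ) * 𝓕 (v : Ed d → ℂ) ξ) := by
    apply HasCompactSupport.of_support_subset_isCompact
      (isCompact_closedBall (0 : Ed d) ((2:ℝ)^q * (8/3)))
    intro ξ hξ
    have h1 : P.φ ((2:ℝ) ^ (-q) • ξ) ≠ 0 := by
      intro h; apply hξ; simp only [h]; simp
    have h2 := (P.supp_φ h1).2
    rw [norm_smul, norm_zpow, Real.norm_ofNat, zpow_neg, inv_mul_le_iff₀ (by positivity)] at h2
    simpa using h2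
  have hs : ContDiff ℝ (⊤ : ℕ∞) (fun ξ : Ed d => (P.φ ((2:ℝ) ^ (-q) • ξ) : ℂ) * 𝓕 (v : Ed d → ℂ) ξ) := by
    have h1 : ContDiff ℝ (⊤ : ℕ∞) (𝓕 (v : Ed d → ℂ)) := by
      rw [← SchwartzMap.fourier_coe]; exact (𝓕 v).smooth _
    have h2 : ContDiff ℝ (⊤ : ℕ∞) (fun ξ : Ed d => (P.φ ((2:ℝ) ^ (-q) • ξ) : ℂ)) :=
      Complex.ofRealCLM.contDiff.comp (P.smooth_φ.comp (contDiff_const_smul _))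
    exact h2.mul h1
  have := plancherel_inv (hc.toSchwartzMap hs)
  rw [lpBlock]
  change eLpNorm (𝓕⁻ ((hc.toSchwartzMap hs : 𝓢(Ed d, ℂ)) : Ed d → ℂ)) 2 volume ^ 2 = _
  rw [this, sq_eLpNorm]
  congr 1
  ext ξ
  change ‖(P.φ ((2:ℝ) ^ (-q) • ξ) : ℂ) * 𝓕 (v : Ed d → ℂ) ξ‖ₑ ^ 2 = _
  rw [enorm_mul]
  congr 2
  rw [← enorm_norm, Complex.norm_real, enorm_norm]

lemma cs_lintegral {α : Type*} [MeasurableSpace α] (μ : Measure α) {f g : α → ℝ≥0∞}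
    (hf : AEMeasurable f μ) (hg : AEMeasurable g μ) :
    (∫⁻ a, f a * g a ∂μ) ^ 2 ≤ (∫⁻ a, f a ^ 2 ∂μ) * ∫⁻ a, g a ^ 2 ∂μ := by
  have h := ENNReal.lintegral_mul_le_Lp_mul_Lq μ (p := 2) (q := 2)
    (by constructor <;> norm_num) hf hg
  have h2 := pow_le_pow_left' h 2
  have e : ∀ x : ℝ≥0∞, (x ^ (1 / 2 : ℝ)) ^ 2 = x := by
    intro x; rw [← ENNReal.rpow_natCast, ← ENNReal.rpow_mul]; simp
  rw [mul_pow, e, e] at h2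
  simpa only [ENNReal.rpow_ofNat, Pi.mul_apply] using h2

/-- Weighted Cauchy-Schwarz for sums. -/
lemma cs_tsum (w x : ℤ → ℝ≥0∞) (hw0 : ∀ i, w i ≠ 0) (hwt : ∀ i, w i ≠ ∞) :
    (∑' i, x i) ^ 2 ≤ (∑' i, w i) * ∑' i, (w i)⁻¹ * x i ^ 2 := by
  have h := cs_lintegral (Measure.count : Measure ℤ) (f := fun i => w i ^ (1/2 : ℝ))
    (g := fun i => w i ^ (-(1/2) : ℝ) * x i) (Measurable.of_discrete.aemeasurable)
    (Measurable.of_discrete.aemeasurable)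
  simp only [lintegral_count] at h
  have e1 : ∀ i, w i ^ (1/2 : ℝ) * (w i ^ (-(1/2) : ℝ) * x i) = x i := by
    intro i
    rw [← mul_assoc, ← ENNReal.rpow_add _ _ (hw0 i) (hwt i)]; simp
  have e2 : ∀ i, (w i ^ (1/2 : ℝ)) ^ 2 = w i := by
    intro i; rw [← ENNReal.rpow_natCast, ← ENNReal.rpow_mul]; simp
  have e3 : ∀ i, (w i ^ (-(1/2) : ℝ) * x i) ^ 2 = (w i)⁻¹ * x i ^ 2 := by
    intro i
    rw [mul_pow]; congr 1
    rw [← ENNReal.rpow_natCast, ← ENNReal.rpow_mul]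
    norm_num [ENNReal.rpow_neg_one]
  simpa only [e1, e2, e3] using h

lemma young_lint {d : ℕ} {k a : Ed d → ℝ≥0∞} (hk : Measurable k) (ha : Measurable a) :
    ∫⁻ x, (∫⁻ y, k y * a (x - y)) ^ 2 ≤ (∫⁻ y, k y) ^ 2 * ∫⁻ y, a y ^ 2 := by
  have h1 : ∀ x, (∫⁻ y, k y * a (x - y)) ^ 2 ≤ (∫⁻ y, k y) * ∫⁻ y, k y * a (x - y) ^ 2 := by
    intro x
    have h := cs_lintegral (volume.withDensity k) (f := fun _ => 1) (g := fun y => a (x - y))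
      aemeasurable_const (by fun_prop)
    rw [lintegral_withDensity_eq_lintegral_mul _ hk (by fun_prop),
      lintegral_withDensity_eq_lintegral_mul _ hk (by fun_prop),
      lintegral_withDensity_eq_lintegral_mul _ hk (by fun_prop)] at h
    simpa using h
  refine (lintegral_mono h1).trans ?_
  rw [lintegral_const_mul _ (by fun_prop), lintegral_lintegral_swap (by fun_prop)]
  have h2 : ∀ y, ∫⁻ x, k y * a (x - y) ^ 2 = k y * ∫⁻ x, a x ^ 2 := by
    intro y
    rw [lintegral_const_mul _ (by fun_prop), lintegral_sub_right_eq_self (fun x => a x ^ 2) y]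
  simp only [h2]
  rw [lintegral_mul_const _ hk, sq, mul_assoc]

lemma conv_comm_lint {d : ℕ} (k a : Ed d → ℝ≥0∞) (x : Ed d) :
    ∫⁻ y, k y * a (x - y) = ∫⁻ y, a y * k (x - y) := by
  rw [← lintegral_sub_left_eq_self (fun y => k y * a (x - y)) x]
  simp [mul_comm]

lemma young_lint' {d : ℕ} {k a : Ed d → ℝ≥0∞} (hk : Measurable k) (ha : Measurable a) :
    ∫⁻ x, (∫⁻ y, k y * a (x - y)) ^ 2 ≤ (∫⁻ y, a y) ^ 2 * ∫⁻ y, k y ^ 2 := by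
  simp_rw [conv_comm_lint k a]
  exact young_lint ha hk

lemma conv_sup_lint {d : ℕ} {k a : Ed d → ℝ≥0∞} (hk : Measurable k) (ha : Measurable a)
    (S : Set (Ed d)) :
    ∫⁻ x in S, (∫⁻ y, k y * a (x - y)) ^ 2 ≤ volume S * ((∫⁻ y, k y ^ 2) * ∫⁻ y, a y ^ 2) := by
  have h1 : ∀ x, (∫⁻ y, k y * a (x - y)) ^ 2 ≤ (∫⁻ y, k y ^ 2) * ∫⁻ y, a y ^ 2 := by
    intro x
    refine (cs_lintegral volume hk.aemeasurable (by fun_prop)).trans ?_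
    rw [lintegral_sub_left_eq_self (fun y => a y ^ 2) x]
  refine (lintegral_mono h1).trans ?_
  simp [mul_comm]

/-- Dyadic shells. -/
def shell (d : ℕ) (m : ℤ) : Set (Ed d) := {ξ | (2:ℝ) ^ m ≤ ‖ξ‖ ∧ ‖ξ‖ < (2:ℝ) ^ (m + 1)}

lemma measurableSet_shell (d : ℕ) (m : ℤ) : MeasurableSet (shell d m) := by
  apply MeasurableSet.inter
  · exact measurableSet_le measurable_const measurable_norm
  · exact measurableSet_lt measurable_norm measurable_const

lemma shell_disj (d : ℕ) : Pairwise (Function.onFun Disjoint (shell d)) := by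
  have key : ∀ i j : ℤ, i < j → Disjoint (shell d i) (shell d j) := by
    intro i j hij
    rw [Set.disjoint_left]
    rintro ξ ⟨_, h1⟩ ⟨h2, _⟩
    have : (2:ℝ) ^ (i + 1) ≤ 2 ^ j := zpow_le_zpow_right₀ (by norm_num) (by omega)
    linarith
  intro i j hij
  rcases lt_or_gt_of_ne hij with h | h
  · exact key i j h
  · exact (key j i h).symm

lemma exists_shell {d : ℕ} {ξ : Ed d} (h : ξ ≠ 0) : ∃ m, ξ ∈ shell d m := by
  obtain ⟨n, hn⟩ := exists_mem_Ico_zpow (x := ‖ξ‖) (y := (2:ℝ)) (by simpa using h) (by norm_num)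
  exact ⟨n, hn.1, hn.2⟩

lemma lintegral_shells {d : ℕ} (hd : 1 ≤ d) (F : Ed d → ℝ≥0∞) :
    ∫⁻ ξ, F ξ = ∑' m, ∫⁻ ξ in shell d m, F ξ := by
  rw [← lintegral_iUnion (measurableSet_shell d) (shell_disj d)]
  have : Nonempty (Fin d) := ⟨⟨0, hd⟩⟩
  rw [← setLIntegral_univ F]
  refine setLIntegral_congr (Filter.EventuallyEq.symm ?_)
  rw [Filter.eventuallyEq_univ, mem_ae_iff]
  refine measure_mono_null (t := {0}) ?_ (by simp)
  intro ξ hξ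
  by_contra h
  apply hξ
  simpa using exists_shell h

lemma vol_ball {d : ℕ} (hd : 1 ≤ d) : ∃ c : ℝ≥0∞, c ≠ ∞ ∧ ∀ m : ℤ,
    volume (Metric.ball (0 : Ed d) ((2:ℝ) ^ m)) ≤ c * 2 ^ ((m : ℝ) * d) := by
  have : Nonempty (Fin d) := ⟨⟨0, hd⟩⟩
  refine ⟨volume (Metric.ball (0 : Ed d) 1), measure_ball_lt_top.ne, fun m => ?_⟩
  rw [Measure.addHaar_ball _ _ (by positivity), mul_comm]
  gcongr
  rw [ENNReal.ofReal_pow (by positivity), ENNReal.rpow_mul, ENNReal.rpow_intCast]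
  simp only [finrank_euclideanSpace, Fintype.card_fin, ENNReal.rpow_natCast]
  gcongr
  rw [← Real.rpow_intCast, ← ENNReal.ofReal_rpow_of_pos (by norm_num)]
  simp

lemma T_add (x y : ℝ) : (2:ℝ≥0∞) ^ x * 2 ^ y = 2 ^ (x + y) :=
  (ENNReal.rpow_add _ _ (by norm_num) (by norm_num)).symm

lemma T_ne_zero (x : ℝ) : (2:ℝ≥0∞) ^ x ≠ 0 := by
  simp

lemma T_ne_top (x : ℝ) : (2:ℝ≥0∞) ^ x ≠ ∞ :=
  ENNReal.rpow_ne_top_of_ne_zero (by norm_num) (by norm_num)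

lemma T_mono {x y : ℝ} (h : x ≤ y) : (2:ℝ≥0∞) ^ x ≤ 2 ^ y :=
  ENNReal.rpow_le_rpow_of_exponent_le (by norm_num) h

lemma T_sq (x : ℝ) : ((2:ℝ≥0∞) ^ x) ^ 2 = 2 ^ (2 * x) := by
  rw [sq, T_add]; ring_nf

/-- The two-sided geometric series. -/
def geomS (ε : ℝ) : ℝ≥0∞ := ∑' n : ℤ, (2:ℝ≥0∞) ^ (-(ε * |(n:ℝ)|))

lemma geom_aux (ε : ℝ) (n : ℤ) : (2:ℝ≥0∞) ^ (-(ε * |(n:ℝ)|)) = (((2:ℝ≥0) ^ (-ε)) ^ n.natAbs : ℝ≥0) := by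
    have e : -(ε * |(n:ℝ)|) = -ε * (n.natAbs : ℝ) := by
      rw [Nat.cast_natAbs, Int.cast_abs]; ring
    rw [← NNReal.rpow_natCast, ← NNReal.rpow_mul, ENNReal.coe_rpow_of_ne_zero (by norm_num), e,
      ENNReal.coe_ofNat]

lemma geom_aux2 {r : ℝ≥0} (hr : r < 1) : ∑' n : ℤ, ((r ^ n.natAbs : ℝ≥0) : ℝ≥0∞) ≠ ∞ := by
  rw [ENNReal.tsum_coe_ne_top_iff_summable]
  rw [← NNReal.summable_coe]
  have h := NNReal.summable_coe.mpr (NNReal.summable_geometric hr)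
  push_cast at h ⊢
  exact Summable.of_nat_of_neg (by simpa using h) (by simpa using h)

lemma geomS_ne_top {ε : ℝ} (hε : 0 < ε) : geomS ε ≠ ∞ := by
  unfold geomS
  have hr : (2:ℝ≥0) ^ (-ε) < 1 := NNReal.rpow_lt_one_of_one_lt_of_neg (by norm_num) (by linarith)
  rw [tsum_congr (geom_aux ε)]
  exact geom_aux2 hr

lemma geomS_shift (ε : ℝ) (m : ℤ) :
    ∑' j : ℤ, (2:ℝ≥0∞) ^ (-(ε * |(m:ℝ) - j|)) = geomS ε := by
  unfold geomS
  rw [← (Equiv.subLeft m).tsum_eq]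
  simp

lemma geomS_shift' (ε : ℝ) (j : ℤ) :
    ∑' m : ℤ, (2:ℝ≥0∞) ^ (-(ε * |(m:ℝ) - j|)) = geomS ε := by
  unfold geomS
  rw [← (Equiv.subRight j).tsum_eq (fun n : ℤ => (2:ℝ≥0∞) ^ (-(ε * |(n:ℝ)|)))]
  simp

lemma shell_subset_ball {d : ℕ} (k : ℤ) : shell d k ⊆ Metric.ball (0 : Ed d) ((2:ℝ) ^ (k + 1)) := by
  intro ξ hξ
  simpa using hξ.2

/-- `L^2` mass on a fattened shell. -/
lemma wide_mass {d : ℕ} {g : Ed d → ℝ≥0∞} {B : ℝ≥0∞}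
    (hB : ∀ k : ℤ, ∫⁻ ξ in shell d k, g ξ ^ 2 ≤ B * 2 ^ (-((k:ℝ) * (d - 2)))) (m : ℤ) :
    ∫⁻ ξ in {ξ : Ed d | (2:ℝ) ^ (m - 1) ≤ ‖ξ‖ ∧ ‖ξ‖ < (2:ℝ) ^ (m + 2)}, g ξ ^ 2
      ≤ 3 * 2 ^ |(d:ℝ) - 2| * B * 2 ^ (-((m:ℝ) * (d - 2))) := by
  have hsub : {ξ : Ed d | (2:ℝ) ^ (m - 1) ≤ ‖ξ‖ ∧ ‖ξ‖ < (2:ℝ) ^ (m + 2)}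
      ⊆ (shell d (m - 1) ∪ shell d m) ∪ shell d (m + 1) := by
    rintro ξ ⟨h1, h2⟩
    by_cases h3 : ‖ξ‖ < (2:ℝ) ^ m
    · left; left; exact ⟨h1, by simpa using h3⟩
    by_cases h4 : ‖ξ‖ < (2:ℝ) ^ (m + 1)
    · left; right; exact ⟨not_lt.mp h3, h4⟩
    · right; exact ⟨not_lt.mp h4, by rw [show m + 1 + 1 = m + 2 by ring]; exact h2⟩
  have hone : ∀ k : ℤ, |(k:ℝ) - m| ≤ 1 → ∫⁻ ξ in shell d k, g ξ ^ 2
      ≤ 2 ^ |(d:ℝ) - 2| * B * 2 ^ (-((m:ℝ) * (d - 2))) := by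
    intro k hk
    refine (hB k).trans ?_
    rw [mul_comm (2 ^ |(d:ℝ) - 2|) B, mul_assoc, T_add]
    gcongr
    · norm_num
    · have h1 : -(((k:ℝ) - m) * (d - 2)) ≤ |(k:ℝ) - m| * |(d:ℝ) - 2| := by
        rw [← abs_mul]; exact neg_le_abs _
      have h2 : |(k:ℝ) - m| * |(d:ℝ) - 2| ≤ 1 * |(d:ℝ) - 2| := by gcongr
      linarith
  calc _ ≤ ∫⁻ ξ in (shell d (m - 1) ∪ shell d m) ∪ shell d (m + 1), g ξ ^ 2 :=
        lintegral_mono_set hsub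
    _ ≤ (∫⁻ ξ in shell d (m - 1), g ξ ^ 2) + (∫⁻ ξ in shell d m, g ξ ^ 2)
        + ∫⁻ ξ in shell d (m + 1), g ξ ^ 2 := by
        refine (lintegral_union_le _ _ _).trans ?_
        gcongr
        exact lintegral_union_le _ _ _
    _ ≤ _ := add_le_add (add_le_add (hone _ (by push_cast; norm_num)) (hone _ (by simp)))
          (hone _ (by push_cast; norm_num))
    _ = _ := by ring

/-- `L^1` mass on a ball. -/
lemma ball_mass {d : ℕ} (hd : 1 ≤ d) : ∃ c : ℝ≥0∞, c ≠ ∞ ∧ ∀ (g : Ed d → ℝ≥0∞) (B : ℝ≥0∞),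
    Measurable g →
    (∀ k : ℤ, ∫⁻ ξ in shell d k, g ξ ^ 2 ≤ B * 2 ^ (-((k:ℝ) * (d - 2)))) → ∀ n : ℤ,
    (∫⁻ ξ in Metric.ball (0 : Ed d) ((2:ℝ) ^ n), g ξ) ^ 2 ≤ c * B * 2 ^ (2 * (n:ℝ)) := by
  obtain ⟨c, hc, hvol⟩ := vol_ball hd
  refine ⟨geomS 1 * (geomS 1 * (c * 2 ^ (d:ℝ))), ?_, ?_⟩
  · have := geomS_ne_top (ε := 1) one_pos
    exact ENNReal.mul_ne_top this (ENNReal.mul_ne_top this (ENNReal.mul_ne_top hc (T_ne_top _)))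
  intro g B hg hB n
  rw [← lintegral_indicator measurableSet_ball, lintegral_shells hd]
  refine (cs_tsum (fun k => 2 ^ (-(1 * |(n:ℝ) - k|))) _ (fun _ => T_ne_zero _)
    (fun _ => T_ne_top _)).trans ?_
  rw [geomS_shift, mul_assoc, mul_assoc]
  gcongr
  calc _ ≤ ∑' k : ℤ, 2 ^ (-(1 * |(n:ℝ) - k|)) * (c * 2 ^ (d:ℝ) * B * 2 ^ (2 * (n:ℝ))) := by
        refine ENNReal.tsum_le_tsum fun k => ?_
        rw [setLIntegral_indicator measurableSet_ball]
        by_cases hk : k < n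
        · have hkn : (k:ℝ) < n := by exact_mod_cast hk
          have h1 : (∫⁻ ξ in Metric.ball (0 : Ed d) ((2:ℝ) ^ n) ∩ shell d k, g ξ) ^ 2
              ≤ c * 2 ^ (((k + 1 : ℤ) : ℝ) * d) * (B * 2 ^ (-((k:ℝ) * (d - 2)))) := by
            calc _ ≤ (∫⁻ ξ in shell d k, 1 * g ξ) ^ 2 := by
                  simp only [one_mul]
                  gcongr
                  exact Set.inter_subset_right
              _ ≤ _ := cs_lintegral _ aemeasurable_const hg.aemeasurable
              _ ≤ _ := by
                  gcongr
                  · simp only [one_pow, lintegral_const, one_mul, Measure.restrict_apply_univ]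
                    exact (measure_mono (shell_subset_ball k)).trans (hvol _)
                  · exact hB k
          refine (mul_le_mul_right h1 _).trans (le_of_eq ?_)
          rw [abs_of_pos (by linarith), ← ENNReal.rpow_neg]
          calc _ = c * B * ((2 ^ (-(-(1 * ((n:ℝ) - k)))) * 2 ^ (((k + 1 : ℤ) : ℝ) * d))
                * 2 ^ (-((k:ℝ) * (d - 2)))) := by ring
            _ = c * B * ((2 ^ (-(1 * ((n:ℝ) - k))) * 2 ^ (d : ℝ)) * 2 ^ (2 * (n:ℝ))) := by
                simp only [T_add]
                congr 2
                push_cast; ring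
            _ = _ := by ring
        · have : Metric.ball (0 : Ed d) ((2:ℝ) ^ n) ∩ shell d k = ∅ := by
            ext ξ
            simp only [Set.mem_inter_iff, Metric.mem_ball, dist_zero_right, Set.mem_empty_iff_false,
              iff_false, not_and]
            intro h1 h2
            have h3 := h2.1
            have : (2:ℝ) ^ n ≤ 2 ^ k := zpow_le_zpow_right₀ (by norm_num) (by omega)
            linarith
          rw [this]; simp
    _ = _ := by
        rw [ENNReal.tsum_mul_right, geomS_shift]; ring

lemma conv_zero_off {d : ℕ} (f g : Ed d → ℝ≥0∞) (A W : Set (Ed d)) (ξ : Ed d)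
    (h : ∀ ζ ∈ A, ξ - ζ ∈ W) :
    ∫⁻ ζ, A.indicator f ζ * g (ξ - ζ) = ∫⁻ ζ, A.indicator f ζ * W.indicator g (ξ - ζ) := by
  congr 1
  ext ζ
  by_cases hζ : ζ ∈ A
  · rw [Set.indicator_of_mem (h ζ hζ)]
  · simp [hζ]

lemma lint_ind_sq {d : ℕ} (f : Ed d → ℝ≥0∞) {A : Set (Ed d)} (hA : MeasurableSet A) :
    ∫⁻ ζ, A.indicator f ζ ^ 2 = ∫⁻ ζ in A, f ζ ^ 2 := by
  rw [← lintegral_indicator hA]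
  congr 1
  ext ζ
  by_cases hζ : ζ ∈ A <;> simp [hζ]

lemma key_est {d : ℕ} (hd : 1 ≤ d) (s ε : ℝ) (hε : 0 < ε) (h1 : ε ≤ (d:ℝ)/2 - 1 - s)
    (h2 : ε ≤ s + (d:ℝ)/2) :
    ∃ C : ℝ≥0∞, C ≠ ∞ ∧ ∀ (f g : Ed d → ℝ≥0∞) (B : ℝ≥0∞), Measurable f → Measurable g →
    (∀ k : ℤ, ∫⁻ ξ in shell d k, g ξ ^ 2 ≤ B * 2 ^ (-((k:ℝ) * (d - 2)))) → ∀ m j : ℤ,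
    ∫⁻ ξ in shell d m, (∫⁻ ζ, (shell d j).indicator f ζ * g (ξ - ζ)) ^ 2
      ≤ C * B * 2 ^ (-(2 * ε * |(m:ℝ) - j|) - 2 * m * s + 2 * j * (s + 1))
        * ∫⁻ ζ in shell d j, f ζ ^ 2 := by
  obtain ⟨c, hc, hvol⟩ := vol_ball hd
  obtain ⟨cb, hc2, hball⟩ := ball_mass hd
  set C1 : ℝ≥0∞ := c * 3 * 2 ^ |(d:ℝ) - 2| * 2 ^ (d:ℝ) with hC1
  set C2 : ℝ≥0∞ := cb * 2 ^ (8 + 4 * |s + 1| + 4 * ε) with hC2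
  have hC1t : C1 ≠ ∞ := ENNReal.mul_ne_top (ENNReal.mul_ne_top
    (ENNReal.mul_ne_top hc (by norm_num)) (T_ne_top _)) (T_ne_top _)
  have hC2t : C2 ≠ ∞ := ENNReal.mul_ne_top hc2 (T_ne_top _)
  refine ⟨C1 + C2, ENNReal.add_ne_top.mpr ⟨hC1t, hC2t⟩, ?_⟩
  intro f g B hf hg hB m j
  have hAj := measurableSet_shell d j
  have hfj : Measurable ((shell d j).indicator f) := hf.indicator hAj
  let W : ℤ → Set (Ed d) := fun m => {ξ : Ed d | (2:ℝ) ^ (m - 1) ≤ ‖ξ‖ ∧ ‖ξ‖ < (2:ℝ) ^ (m + 2)}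
  have hW : ∀ m, MeasurableSet (W m) := fun m =>
    (measurableSet_le measurable_const measurable_norm).inter
      (measurableSet_lt measurable_norm measurable_const)
  have hWm : ∀ m, ∫⁻ ξ, (W m).indicator g ξ ^ 2
      ≤ 3 * 2 ^ |(d:ℝ) - 2| * B * 2 ^ (-((m:ℝ) * (d - 2))) := by
    intro m
    rw [lint_ind_sq g (hW m)]
    exact wide_mass hB m
  have hvs : ∀ k : ℤ, volume (shell d k) ≤ c * 2 ^ (((k:ℝ) + 1) * d) := by
    intro k
    have := (measure_mono (shell_subset_ball k)).trans (hvol (k + 1))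
    push_cast at this
    exact this
  have zp : ∀ (a : ℤ) (b : ℤ), (2:ℝ) ^ (a + b) = 2 ^ a * 2 ^ b := fun a b =>
    zpow_add₀ (by norm_num) a b
  rcases lt_or_ge (j + 2) m with hjm | hjm
  · have hmj : (j:ℝ) < m := by exact_mod_cast (by omega : j < m)
    calc _ ≤ ∫⁻ ξ in shell d m,
          (∫⁻ ζ, (shell d j).indicator f ζ * (W m).indicator g (ξ - ζ)) ^ 2 := by
          refine setLIntegral_mono' (measurableSet_shell d m) fun ξ hξ => ?_
          rw [conv_zero_off f g (shell d j) (W m) ξ ?_]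
          intro ζ hζ
          have e1 : (2:ℝ) ^ (j + 1) ≤ 2 ^ (m - 2) := zpow_le_zpow_right₀ (by norm_num) (by omega)
          have e2 := zp (m - 2) 1
          have e3 := zp (m - 2) 2
          have e4 := zp (m - 2) 3
          have e5 := zp (m - 2) 4
          have e0 : (0:ℝ) < 2 ^ (m - 2) := by positivity
          rw [show m - 2 + 1 = m - 1 by ring] at e2
          rw [show m - 2 + 2 = m by ring] at e3
          rw [show m - 2 + 3 = m + 1 by ring] at e4
          rw [show m - 2 + 4 = m + 2 by ring] at e5
          norm_num at e2 e3 e4 e5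
          have a1 := hξ.1
          have a2 := hξ.2
          have a3 := hζ.2
          have a4 := norm_sub_le ξ ζ
          have a5 := norm_sub_norm_le ξ ζ
          exact ⟨by linarith, by linarith⟩
      _ ≤ ∫⁻ ξ, (∫⁻ ζ, (shell d j).indicator f ζ * (W m).indicator g (ξ - ζ)) ^ 2 :=
          setLIntegral_le_lintegral _ _
      _ ≤ (∫⁻ ζ, (shell d j).indicator f ζ) ^ 2 * ∫⁻ ξ, (W m).indicator g ξ ^ 2 :=
          young_lint hfj (hg.indicator (hW m))
      _ ≤ (c * 2 ^ (((j:ℝ) + 1) * d) * ∫⁻ ζ in shell d j, f ζ ^ 2)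
          * (3 * 2 ^ |(d:ℝ) - 2| * B * 2 ^ (-((m:ℝ) * (d - 2)))) := by
          gcongr
          · rw [lintegral_indicator hAj]
            have := cs_lintegral (volume.restrict (shell d j)) (f := fun _ => 1) (g := f)
              aemeasurable_const hf.aemeasurable
            simp only [one_mul, one_pow, lintegral_const, Measure.restrict_apply_univ] at this
            refine this.trans ?_
            gcongr
            exact hvs j
          · exact hWm m
      _ = c * 3 * 2 ^ |(d:ℝ) - 2| * B * (2 ^ (((j:ℝ) + 1) * d) * 2 ^ (-((m:ℝ) * (d - 2))))
          * ∫⁻ ζ in shell d j, f ζ ^ 2 := by ring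
      _ ≤ c * 3 * 2 ^ |(d:ℝ) - 2| * B *
          (2 ^ (d:ℝ) * 2 ^ (-(2 * ε * |(m:ℝ) - j|) - 2 * m * s + 2 * j * (s + 1)))
          * ∫⁻ ζ in shell d j, f ζ ^ 2 := by
          gcongr ?_ * ?_ * ?_
          · exact le_rfl
          · rw [T_add, T_add]
            apply T_mono
            rw [abs_of_pos (by linarith)]
            have := mul_nonneg (sub_nonneg.mpr hmj.le) (sub_nonneg.mpr h1)
            nlinarith
          · exact le_rfl
      _ = C1 * B * 2 ^ (-(2 * ε * |(m:ℝ) - j|) - 2 * m * s + 2 * j * (s + 1))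
          * ∫⁻ ζ in shell d j, f ζ ^ 2 := by rw [hC1]; ring
      _ ≤ _ := by
          gcongr
          exact le_self_add
  rcases lt_or_ge (m + 2) j with hjm2 | hjm2
  · have hmj : (m:ℝ) < j := by exact_mod_cast (by omega : m < j)
    calc _ ≤ ∫⁻ ξ in shell d m,
          (∫⁻ ζ, (shell d j).indicator f ζ * (W j).indicator g (ξ - ζ)) ^ 2 := by
          refine setLIntegral_mono' (measurableSet_shell d m) fun ξ hξ => ?_
          rw [conv_zero_off f g (shell d j) (W j) ξ ?_]
          intro ζ hζ
          have e1 : (2:ℝ) ^ (m + 1) ≤ 2 ^ (j - 2) := zpow_le_zpow_right₀ (by norm_num) (by omega)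
          have e2 := zp (j - 2) 1
          have e3 := zp (j - 2) 2
          have e4 := zp (j - 2) 3
          have e5 := zp (j - 2) 4
          have e0 : (0:ℝ) < 2 ^ (j - 2) := by positivity
          rw [show j - 2 + 1 = j - 1 by ring] at e2
          rw [show j - 2 + 2 = j by ring] at e3
          rw [show j - 2 + 3 = j + 1 by ring] at e4
          rw [show j - 2 + 4 = j + 2 by ring] at e5
          norm_num at e2 e3 e4 e5
          have a1 := hζ.1
          have a2 := hζ.2
          have a3 := hξ.2
          have a4 := norm_sub_le ξ ζ
          have a5 := norm_sub_norm_le ζ ξ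
          rw [norm_sub_rev] at a5
          exact ⟨by linarith, by linarith⟩
      _ ≤ volume (shell d m) * ((∫⁻ ζ, (shell d j).indicator f ζ ^ 2)
            * ∫⁻ ξ, (W j).indicator g ξ ^ 2) :=
          conv_sup_lint hfj (hg.indicator (hW j)) _
      _ ≤ c * 2 ^ (((m:ℝ) + 1) * d) * ((∫⁻ ζ in shell d j, f ζ ^ 2)
          * (3 * 2 ^ |(d:ℝ) - 2| * B * 2 ^ (-((j:ℝ) * (d - 2))))) := by
          rw [lint_ind_sq f hAj]
          gcongr
          · exact hvs m
          · exact hWm j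
      _ = c * 3 * 2 ^ |(d:ℝ) - 2| * B * (2 ^ (((m:ℝ) + 1) * d) * 2 ^ (-((j:ℝ) * (d - 2))))
          * ∫⁻ ζ in shell d j, f ζ ^ 2 := by ring
      _ ≤ c * 3 * 2 ^ |(d:ℝ) - 2| * B *
          (2 ^ (d:ℝ) * 2 ^ (-(2 * ε * |(m:ℝ) - j|) - 2 * m * s + 2 * j * (s + 1)))
          * ∫⁻ ζ in shell d j, f ζ ^ 2 := by
          gcongr ?_ * ?_ * ?_
          · exact le_rfl
          · rw [T_add, T_add]
            apply T_mono
            rw [abs_of_neg (by linarith)]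
            have := mul_nonneg (sub_nonneg.mpr hmj.le) (sub_nonneg.mpr h2)
            nlinarith
          · exact le_rfl
      _ = C1 * B * 2 ^ (-(2 * ε * |(m:ℝ) - j|) - 2 * m * s + 2 * j * (s + 1))
          * ∫⁻ ζ in shell d j, f ζ ^ 2 := by rw [hC1]; ring
      _ ≤ _ := by
          gcongr
          exact le_self_add
  · have habs : |(m:ℝ) - j| ≤ 2 := by
      have u1 : (m:ℝ) ≤ j + 2 := by exact_mod_cast hjm
      have u2 : (j:ℝ) ≤ m + 2 := by exact_mod_cast hjm2
      rw [abs_le]; constructor <;> linarith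
    let D : Set (Ed d) := Metric.ball (0 : Ed d) ((2:ℝ) ^ (m + 4))
    have hD : MeasurableSet D := measurableSet_ball
    calc _ ≤ ∫⁻ ξ in shell d m,
          (∫⁻ ζ, (shell d j).indicator f ζ * D.indicator g (ξ - ζ)) ^ 2 := by
          refine setLIntegral_mono' (measurableSet_shell d m) fun ξ hξ => ?_
          rw [conv_zero_off f g (shell d j) D ξ ?_]
          intro ζ hζ
          have e1 : (2:ℝ) ^ (j + 1) ≤ 2 ^ (m + 3) := zpow_le_zpow_right₀ (by norm_num) (by omega)
          have e3 := zp m 1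
          have e4 := zp m 3
          have e5 := zp m 4
          have e0 : (0:ℝ) < 2 ^ m := by positivity
          norm_num at e3 e4 e5
          have a2 := hξ.2
          have a3 := hζ.2
          have a4 := norm_sub_le ξ ζ
          simp only [D, Metric.mem_ball, dist_zero_right]
          linarith
      _ ≤ ∫⁻ ξ, (∫⁻ ζ, (shell d j).indicator f ζ * D.indicator g (ξ - ζ)) ^ 2 :=
          setLIntegral_le_lintegral _ _
      _ ≤ (∫⁻ ξ, D.indicator g ξ) ^ 2 * ∫⁻ ζ, (shell d j).indicator f ζ ^ 2 :=
          young_lint' hfj (hg.indicator hD)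
      _ ≤ (cb * B * 2 ^ (2 * ((m + 4 : ℤ) : ℝ))) * ∫⁻ ζ in shell d j, f ζ ^ 2 := by
          rw [lint_ind_sq f hAj, lintegral_indicator hD]
          gcongr
          exact hball g B hg hB (m + 4)
      _ ≤ cb * B * (2 ^ (8 + 4 * |s + 1| + 4 * ε)
          * 2 ^ (-(2 * ε * |(m:ℝ) - j|) - 2 * m * s + 2 * j * (s + 1)))
          * ∫⁻ ζ in shell d j, f ζ ^ 2 := by
          gcongr ?_ * ?_ * ?_
          · exact le_rfl
          · rw [T_add]
            apply T_mono
            push_cast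
            have v1 : ((m:ℝ) - j) * (s + 1) ≤ |(m:ℝ) - j| * |s + 1| := by
              rw [← abs_mul]; exact le_abs_self _
            have v2 : |(m:ℝ) - j| * |s + 1| ≤ 2 * |s + 1| := by gcongr
            have v3 : ε * |(m:ℝ) - j| ≤ ε * 2 := by gcongr
            nlinarith
          · exact le_rfl
      _ = C2 * B * 2 ^ (-(2 * ε * |(m:ℝ) - j|) - 2 * m * s + 2 * j * (s + 1))
          * ∫⁻ ζ in shell d j, f ζ ^ 2 := by rw [hC2]; ring
      _ ≤ _ := by
          gcongr
          exact le_add_self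

lemma dyadic_sum {d : ℕ} (hd : 1 ≤ d) (s ε : ℝ) (hε : 0 < ε) (h1 : ε ≤ (d:ℝ)/2 - 1 - s)
    (h2 : ε ≤ s + (d:ℝ)/2) :
    ∃ C : ℝ≥0∞, C ≠ ∞ ∧ ∀ (f g : Ed d → ℝ≥0∞) (B : ℝ≥0∞), Measurable f → Measurable g →
    (∀ k : ℤ, ∫⁻ ξ in shell d k, g ξ ^ 2 ≤ B * 2 ^ (-((k:ℝ) * (d - 2)))) →
    ∑' m : ℤ, 2 ^ (2 * (m:ℝ) * s) * ∫⁻ ξ in shell d m, (∫⁻ ζ, f ζ * g (ξ - ζ)) ^ 2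
      ≤ C * B * ∑' j : ℤ, 2 ^ (2 * (j:ℝ) * (s + 1)) * ∫⁻ ζ in shell d j, f ζ ^ 2 := by
  obtain ⟨C, hC, hkey⟩ := key_est hd s ε hε h1 h2
  have hS := geomS_ne_top hε
  refine ⟨geomS ε * geomS ε * C, ENNReal.mul_ne_top (ENNReal.mul_ne_top hS hS) hC, ?_⟩
  intro f g B hf hg hB
  set a : ℤ → ℝ≥0∞ := fun j => 2 ^ (2 * (j:ℝ) * (s + 1)) * ∫⁻ ζ in shell d j, f ζ ^ 2 with ha
  have hmeas : ∀ j, Measurable (fun ξ : Ed d => ∫⁻ ζ, (shell d j).indicator f ζ * g (ξ - ζ)) := by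
    intro j
    have hfj : Measurable ((shell d j).indicator f) := hf.indicator (measurableSet_shell d j)
    have : Measurable (Function.uncurry fun (ξ ζ : Ed d) => (shell d j).indicator f ζ * g (ξ - ζ)) := by
      unfold Function.uncurry
      fun_prop
    exact this.lintegral_prod_right
  have hm : ∀ m : ℤ, 2 ^ (2 * (m:ℝ) * s) * ∫⁻ ξ in shell d m, (∫⁻ ζ, f ζ * g (ξ - ζ)) ^ 2
      ≤ geomS ε * C * B * ∑' j : ℤ, 2 ^ (-(ε * |(m:ℝ) - j|)) * a j := by
    intro m
    have hpt : ∀ ξ : Ed d, (∫⁻ ζ, f ζ * g (ξ - ζ)) ^ 2 ≤ geomS ε *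
        ∑' j : ℤ, (2 ^ (-(ε * |(m:ℝ) - j|)))⁻¹
          * (∫⁻ ζ, (shell d j).indicator f ζ * g (ξ - ζ)) ^ 2 := by
      intro ξ
      have e : ∫⁻ ζ, f ζ * g (ξ - ζ)
          = ∑' j : ℤ, ∫⁻ ζ, (shell d j).indicator f ζ * g (ξ - ζ) := by
        rw [lintegral_shells hd]
        congr 1
        ext j
        rw [← lintegral_indicator (measurableSet_shell d j)]
        congr 1
        ext ζ
        by_cases hζ : ζ ∈ shell d j <;> simp [hζ]
      rw [e, ← geomS_shift ε m]
      exact cs_tsum _ _ (fun _ => T_ne_zero _) (fun _ => T_ne_top _)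
    calc _ ≤ 2 ^ (2 * (m:ℝ) * s) * ∫⁻ ξ in shell d m, geomS ε *
        ∑' j : ℤ, (2 ^ (-(ε * |(m:ℝ) - j|)))⁻¹
          * (∫⁻ ζ, (shell d j).indicator f ζ * g (ξ - ζ)) ^ 2 := by
          gcongr with ξ
          exact hpt ξ
      _ = 2 ^ (2 * (m:ℝ) * s) * (geomS ε *
        ∑' j : ℤ, (2 ^ (-(ε * |(m:ℝ) - j|)))⁻¹
          * ∫⁻ ξ in shell d m, (∫⁻ ζ, (shell d j).indicator f ζ * g (ξ - ζ)) ^ 2) := by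
          rw [lintegral_const_mul' _ _ hS, lintegral_tsum]
          · congr 3
            ext j
            rw [lintegral_const_mul _ ((hmeas j).pow_const 2)]
          · intro j
            exact (((hmeas j).pow_const 2).const_mul _).aemeasurable
      _ ≤ 2 ^ (2 * (m:ℝ) * s) * (geomS ε *
        ∑' j : ℤ, (2 ^ (-(ε * |(m:ℝ) - j|)))⁻¹
          * (C * B * 2 ^ (-(2 * ε * |(m:ℝ) - j|) - 2 * m * s + 2 * j * (s + 1))
        * ∫⁻ ζ in shell d j, f ζ ^ 2)) := by
          gcongr with j
          exact hkey f g B hf hg hB m j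
      _ = geomS ε * C * B * ∑' j : ℤ, 2 ^ (2 * (m:ℝ) * s) * ((2 ^ (-(ε * |(m:ℝ) - j|)))⁻¹
          * (2 ^ (-(2 * ε * |(m:ℝ) - j|) - 2 * m * s + 2 * j * (s + 1))
        * ∫⁻ ζ in shell d j, f ζ ^ 2)) := by
          rw [ENNReal.tsum_mul_left]
          have : ∀ j : ℤ, (2 ^ (-(ε * |(m:ℝ) - j|)))⁻¹
            * (C * B * 2 ^ (-(2 * ε * |(m:ℝ) - j|) - 2 * m * s + 2 * j * (s + 1))
            * ∫⁻ ζ in shell d j, f ζ ^ 2) = C * B * ((2 ^ (-(ε * |(m:ℝ) - j|)))⁻¹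
            * (2 ^ (-(2 * ε * |(m:ℝ) - j|) - 2 * m * s + 2 * j * (s + 1))
            * ∫⁻ ζ in shell d j, f ζ ^ 2)) := fun j => by ring
          simp_rw [this]
          rw [ENNReal.tsum_mul_left]
          ring
      _ = _ := by
          congr 1
          refine tsum_congr fun j => ?_
          simp only [ha]
          rw [← ENNReal.rpow_neg, ← mul_assoc, ← mul_assoc, ← mul_assoc, T_add, T_add, T_add]
          congr 2
          ring
  calc _ ≤ ∑' m : ℤ, geomS ε * C * B * ∑' j : ℤ, 2 ^ (-(ε * |(m:ℝ) - j|)) * a j :=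
        ENNReal.tsum_le_tsum hm
    _ = geomS ε * C * B * ∑' j : ℤ, ∑' m : ℤ, 2 ^ (-(ε * |(m:ℝ) - j|)) * a j := by
        rw [ENNReal.tsum_mul_left, ENNReal.tsum_comm]
    _ = geomS ε * C * B * ∑' j : ℤ, geomS ε * a j := by
        congr 1
        refine tsum_congr fun j => ?_
        rw [ENNReal.tsum_mul_right, geomS_shift']
    _ = _ := by
        rw [ENNReal.tsum_mul_left]; ring

lemma shell_weight {d : ℕ} (s : ℝ) (m : ℤ) {ξ : Ed d} (h : ξ ∈ shell d m) :
    (2:ℝ≥0∞) ^ ((m:ℝ) * s - |s|) ≤ ‖‖ξ‖ ^ s‖ₑ ∧ ‖‖ξ‖ ^ s‖ₑ ≤ (2:ℝ≥0∞) ^ ((m:ℝ) * s + |s|) := by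
  have hpos : 0 < ‖ξ‖ := lt_of_lt_of_le (by positivity) h.1
  obtain ⟨t, ht⟩ : ∃ t : ℝ, ‖ξ‖ = 2 ^ t := ⟨Real.logb 2 ‖ξ‖, by
    rw [Real.rpow_logb (by norm_num) (by norm_num) hpos]⟩
  have a1 := h.1
  have a2 := h.2
  rw [ht, ← Real.rpow_intCast] at a1 a2
  rw [Real.rpow_le_rpow_left_iff (by norm_num)] at a1
  rw [Real.rpow_lt_rpow_left_iff (by norm_num)] at a2
  push_cast at a2
  have e : ‖‖ξ‖ ^ s‖ₑ = (2:ℝ≥0∞) ^ (t * s) := by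
    rw [ht, ← Real.rpow_mul (by norm_num), Real.enorm_eq_ofReal (by positivity),
      ← ENNReal.ofReal_rpow_of_pos (by norm_num)]
    simp
  have b : |(t - m) * s| ≤ |s| := by
    rw [abs_mul]
    have : |t - m| ≤ 1 := by rw [abs_le]; constructor <;> linarith
    nlinarith [abs_nonneg s]
  rw [abs_le] at b
  rw [e]
  exact ⟨T_mono (by nlinarith), T_mono (by nlinarith)⟩

lemma sob_sq {d : ℕ} (hd : 1 ≤ d) (s : ℝ) (u : Ed d → ℂ) :
    sobNorm s u ^ 2 = ∑' m : ℤ, ∫⁻ ξ in shell d m, ‖‖ξ‖ ^ s‖ₑ ^ 2 * ‖𝓕 u ξ‖ₑ ^ 2 := by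
  rw [sobNorm, sq_eLpNorm, ← lintegral_shells hd]
  congr 1
  ext ξ
  rw [enorm_mul, mul_pow, enorm_norm (𝓕 u ξ)]

lemma sob_upper {d : ℕ} (hd : 1 ≤ d) (s : ℝ) (u : Ed d → ℂ) :
    sobNorm s u ^ 2 ≤ 2 ^ (2 * |s|) *
      ∑' m : ℤ, 2 ^ (2 * (m:ℝ) * s) * ∫⁻ ξ in shell d m, ‖𝓕 u ξ‖ₑ ^ 2 := by
  rw [sob_sq hd, ← ENNReal.tsum_mul_left]
  refine ENNReal.tsum_le_tsum fun m => ?_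
  rw [← mul_assoc, T_add, ← lintegral_const_mul' _ _ (T_ne_top _)]
  refine setLIntegral_mono' (measurableSet_shell d m) fun ξ hξ => ?_
  gcongr
  refine (pow_le_pow_left' (shell_weight s m hξ).2 2).trans (le_of_eq ?_)
  rw [T_sq]; congr 1; ring

lemma sob_lower {d : ℕ} (hd : 1 ≤ d) (s : ℝ) (u : Ed d → ℂ) :
    ∑' m : ℤ, 2 ^ (2 * (m:ℝ) * s) * ∫⁻ ξ in shell d m, ‖𝓕 u ξ‖ₑ ^ 2
      ≤ 2 ^ (2 * |s|) * sobNorm s u ^ 2 := by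
  rw [sob_sq hd, ← ENNReal.tsum_mul_left]
  refine ENNReal.tsum_le_tsum fun m => ?_
  rw [← lintegral_const_mul' _ _ (T_ne_top _), ← lintegral_const_mul' _ _ (T_ne_top _)]
  refine setLIntegral_mono' (measurableSet_shell d m) fun ξ hξ => ?_
  rw [← mul_assoc]
  gcongr
  calc (2:ℝ≥0∞) ^ (2 * (m:ℝ) * s) = 2 ^ (2 * |s|) * (2 ^ ((m:ℝ) * s - |s|)) ^ 2 := by
        rw [T_sq, T_add]; congr 1; ring
    _ ≤ _ := by
        gcongr
        exact (shell_weight s m hξ).1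

lemma besov_shell {d : ℕ} (P : LPPair d) (v : 𝓢(Ed d, ℂ)) (k : ℤ) :
    ∫⁻ ξ in shell d k, ‖𝓕 (v : Ed d → ℂ) ξ‖ₑ ^ 2
      ≤ (9 * 2 ^ |(d:ℝ) - 2| * besovNorm P ((d : ℝ)/2 - 1) 2 ∞ ⇑v ^ 2)
        * 2 ^ (-((k:ℝ) * (d - 2))) := by
  set b := besovNorm P ((d : ℝ)/2 - 1) 2 ∞ ⇑v with hb
  have hq : ∀ q : ℤ, eLpNorm (lpBlock P q v) 2 volume ^ 2 ≤ b ^ 2 * 2 ^ (-((q:ℝ) * (d - 2))) := by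
    intro q
    have h1 : (2:ℝ≥0∞) ^ ((q : ℝ) * ((d:ℝ)/2 - 1)) * eLpNorm (lpBlock P q v) 2 volume ≤ b := by
      rw [hb, besovNorm, ellNorm, if_pos rfl]
      exact le_iSup (fun q : ℤ => (2:ℝ≥0∞) ^ ((q : ℝ) * ((d:ℝ)/2 - 1))
        * eLpNorm (lpBlock P q v) 2 volume) q
    have h2 := mul_le_mul_left (pow_le_pow_left' h1 2) ((2:ℝ≥0∞) ^ (-((q:ℝ) * (d - 2))))
    refine le_trans (le_of_eq ?_) h2
    rw [mul_pow, T_sq, mul_right_comm, T_add]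
    ring_nf
    simp
  have hcont : Continuous (𝓕 (v : Ed d → ℂ)) := by
    rw [← SchwartzMap.fourier_coe]; exact (𝓕 v).continuous
  have hφ : Continuous P.φ := P.smooth_φ.continuous
  let p : ℤ → Ed d → ℝ≥0∞ := fun q ξ => (‖P.φ ((2:ℝ) ^ (-q) • ξ)‖ₑ * ‖𝓕 (v : Ed d → ℂ) ξ‖ₑ) ^ 2
  have hpm : ∀ q, Measurable (p q) := by
    intro q
    have : Continuous (p q) := by
      refine ENNReal.continuous_pow 2 |>.comp ?_
      have : Continuous fun ξ : Ed d => ‖P.φ ((2:ℝ) ^ (-q) • ξ) • 𝓕 (v : Ed d → ℂ) ξ‖ₑ := by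
        fun_prop
      simpa only [enorm_smul] using this
    exact this.measurable
  have hone : ∀ q : ℤ, |(q:ℝ) - k| ≤ 1 → ∫⁻ ξ, p q ξ
      ≤ 2 ^ |(d:ℝ) - 2| * b ^ 2 * 2 ^ (-((k:ℝ) * (d - 2))) := by
    intro q hk
    rw [← lpBlock_sq]
    refine (hq q).trans ?_
    rw [mul_comm (2 ^ |(d:ℝ) - 2|) (b ^ 2), mul_assoc, T_add]
    gcongr ?_ * ?_
    · exact le_rfl
    apply T_mono
    have h1 : -(((q:ℝ) - k) * (d - 2)) ≤ |(q:ℝ) - k| * |(d:ℝ) - 2| := by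
      rw [← abs_mul]; exact neg_le_abs _
    have h2 : |(q:ℝ) - k| * |(d:ℝ) - 2| ≤ 1 * |(d:ℝ) - 2| := by gcongr
    linarith
  have hpt : ∀ ξ ∈ shell d k, ‖𝓕 (v : Ed d → ℂ) ξ‖ₑ ^ 2
      ≤ 3 * (p (k - 1) ξ + p k ξ + p (k + 1) ξ) := by
    intro ξ hξ
    have hpos : 0 < ‖ξ‖ := lt_of_lt_of_le (by positivity) hξ.1
    have hsum := P.sum_one' ξ (by simpa using hpos)
    have hfin : ∑' q : ℤ, P.φ ((2:ℝ) ^ (-q) • ξ)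
        = ∑ q ∈ ({k - 1, k, k + 1} : Finset ℤ), P.φ ((2:ℝ) ^ (-q) • ξ) := by
      apply tsum_eq_sum
      intro q hqn
      by_contra hne
      apply hqn
      have h := P.supp_φ hne
      simp only [Set.mem_ofPred_eq, norm_smul, norm_zpow, Real.norm_ofNat] at h
      have hq0 : (0:ℝ) < 2 ^ q := by positivity
      rw [zpow_neg, inv_mul_le_iff₀ hq0, le_inv_mul_iff₀ hq0] at h
      have a1 := hξ.1
      have a2 := hξ.2
      rw [zpow_add₀ (by norm_num), zpow_one] at a2
      have hk0 : (0:ℝ) < 2 ^ k := by positivity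
      have l1 : q < k + 2 := by
        rw [← zpow_lt_zpow_iff_right₀ (a := (2:ℝ)) (by norm_num), zpow_add₀ (by norm_num)]
        norm_num
        linarith [h.1]
      have l2 : k < q + 2 := by
        rw [← zpow_lt_zpow_iff_right₀ (a := (2:ℝ)) (by norm_num), zpow_add₀ (by norm_num)]
        norm_num
        linarith [h.2]
      simp only [Finset.mem_insert, Finset.mem_singleton]
      omega
    rw [hfin, Finset.sum_insert (by simp; omega), Finset.sum_insert (by simp), Finset.sum_singleton] at hsum
    set x := P.φ ((2:ℝ) ^ (-(k - 1)) • ξ)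
    set y := P.φ ((2:ℝ) ^ (-k) • ξ)
    set z := P.φ ((2:ℝ) ^ (-(k + 1)) • ξ)
    have hxyz : (1:ℝ) ≤ 3 * (x ^ 2 + y ^ 2 + z ^ 2) := by
      have : (x + (y + z)) ^ 2 = 1 := by rw [hsum]; norm_num
      nlinarith [sq_nonneg (x - y), sq_nonneg (y - z), sq_nonneg (x - z)]
    have hE : (1:ℝ≥0∞) ≤ 3 * (‖x‖ₑ ^ 2 + ‖y‖ₑ ^ 2 + ‖z‖ₑ ^ 2) := by
      have := ENNReal.ofReal_le_ofReal hxyz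
      rw [ENNReal.ofReal_mul (by norm_num), ENNReal.ofReal_add (by positivity) (by positivity),
        ENNReal.ofReal_add (by positivity) (by positivity)] at this
      have hh : ∀ t : ℝ, ENNReal.ofReal (t ^ 2) = ‖t‖ₑ ^ 2 := by
        intro t
        rw [← sq_abs, ENNReal.ofReal_pow (abs_nonneg t), ← Real.enorm_abs,
          Real.enorm_eq_ofReal (abs_nonneg t)]
      simpa [hh] using this
    calc _ = 1 * ‖𝓕 (v : Ed d → ℂ) ξ‖ₑ ^ 2 := (one_mul _).symm
      _ ≤ (3 * (‖x‖ₑ ^ 2 + ‖y‖ₑ ^ 2 + ‖z‖ₑ ^ 2)) * ‖𝓕 (v : Ed d → ℂ) ξ‖ₑ ^ 2 := by gcongr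
      _ = 3 * ((‖x‖ₑ * ‖𝓕 (v : Ed d → ℂ) ξ‖ₑ) ^ 2 + (‖y‖ₑ * ‖𝓕 (v : Ed d → ℂ) ξ‖ₑ) ^ 2
          + (‖z‖ₑ * ‖𝓕 (v : Ed d → ℂ) ξ‖ₑ) ^ 2) := by ring
  calc _ ≤ ∫⁻ ξ in shell d k, 3 * (p (k - 1) ξ + p k ξ + p (k + 1) ξ) :=
        setLIntegral_mono' (measurableSet_shell d k) hpt
    _ ≤ ∫⁻ ξ, 3 * (p (k - 1) ξ + p k ξ + p (k + 1) ξ) := setLIntegral_le_lintegral _ _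
    _ = 3 * ((∫⁻ ξ, p (k - 1) ξ) + (∫⁻ ξ, p k ξ) + ∫⁻ ξ, p (k + 1) ξ) := by
        rw [lintegral_const_mul' _ _ (by norm_num), lintegral_add_right _ (hpm _),
          lintegral_add_right _ (hpm _)]
    _ ≤ 3 * (_ + _ + _) := mul_le_mul_right (add_le_add (add_le_add
          (hone _ (by push_cast; norm_num)) (hone _ (by simp)))
          (hone _ (by push_cast; norm_num))) _
    _ = _ := by ring

/-- for `s ∈ (−d/2, d/2 − 1)`,
`‖uv‖_{Ḣ^s} ≤ C‖u‖_{Ḣ^{s+1}}‖v‖_{Ḃ^{d/2−1}_{2,∞}}`. -/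
theorem stmt9 {d : ℕ} (hd : 1 ≤ d) (P : LPPair d) (s : ℝ)
    (hs1 : -((d : ℝ)/2) < s) (hs2 : s < (d : ℝ)/2 - 1) :
    ∃ C : ℝ≥0, 0 < C ∧ ∀ u v : 𝓢(Ed d, ℂ),
      sobNorm s (fun x => u x * v x)
        ≤ C * sobNorm (s + 1) ⇑u * besovNorm P ((d : ℝ)/2 - 1) 2 ∞ ⇑v := by
  obtain ⟨ε, hε, h1, h2⟩ : ∃ ε : ℝ, 0 < ε ∧ ε ≤ (d:ℝ)/2 - 1 - s ∧ ε ≤ s + (d:ℝ)/2 :=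
    ⟨min ((d:ℝ)/2 - 1 - s) (s + (d:ℝ)/2), lt_min (by linarith) (by linarith),
      min_le_left _ _, min_le_right _ _⟩
  obtain ⟨C, hC, hdy⟩ := dyadic_sum hd s ε hε h1 h2
  set K : ℝ≥0∞ := 2 ^ (2 * |s|) * (C * (9 * 2 ^ |(d:ℝ) - 2|) * 2 ^ (2 * |s + 1|)) with hK
  have hKt : K ≠ ∞ := ENNReal.mul_ne_top (T_ne_top _) (ENNReal.mul_ne_top
    (ENNReal.mul_ne_top hC (ENNReal.mul_ne_top (by norm_num) (T_ne_top _))) (T_ne_top _))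
  refine ⟨K.toNNReal + 1, by positivity, fun u v => ?_⟩
  have hK2 : K ≤ ((K.toNNReal + 1 : ℝ≥0) : ℝ≥0∞) ^ 2 := by
    push_cast
    rw [ENNReal.coe_toNNReal hKt, sq]
    calc K = K * 1 := (mul_one _).symm
      _ ≤ _ := by gcongr <;> simp
  have hmeas : ∀ w : 𝓢(Ed d, ℂ), Measurable fun ξ => ‖𝓕 (w : Ed d → ℂ) ξ‖ₑ := by
    intro w
    have : Continuous (𝓕 (w : Ed d → ℂ)) := by
      rw [← SchwartzMap.fourier_coe]; exact (𝓕 w).continuous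
    exact this.enorm.measurable
  have hsq : sobNorm s (fun x => u x * v x) ^ 2
      ≤ (((K.toNNReal + 1 : ℝ≥0) : ℝ≥0∞) * sobNorm (s + 1) ⇑u
        * besovNorm P ((d : ℝ)/2 - 1) 2 ∞ ⇑v) ^ 2 := by
    set b := besovNorm P ((d : ℝ)/2 - 1) 2 ∞ ⇑v with hb
    calc _ ≤ _ := sob_upper hd s _
      _ ≤ 2 ^ (2 * |s|) * ∑' m : ℤ, 2 ^ (2 * (m:ℝ) * s) * ∫⁻ ξ in shell d m,
          (∫⁻ ζ, ‖𝓕 (u : Ed d → ℂ) ζ‖ₑ * ‖𝓕 (v : Ed d → ℂ) (ξ - ζ)‖ₑ) ^ 2 := by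
          gcongr with m ξ
          exact fourier_mul_le u v ξ
      _ ≤ 2 ^ (2 * |s|) * (C * (9 * 2 ^ |(d:ℝ) - 2| * b ^ 2) * ∑' j : ℤ,
          2 ^ (2 * (j:ℝ) * (s + 1)) * ∫⁻ ζ in shell d j, ‖𝓕 (u : Ed d → ℂ) ζ‖ₑ ^ 2) := by
          gcongr
          exact hdy _ _ _ (hmeas u) (hmeas v) (besov_shell P v)
      _ ≤ 2 ^ (2 * |s|) * (C * (9 * 2 ^ |(d:ℝ) - 2| * b ^ 2) *
          (2 ^ (2 * |s + 1|) * sobNorm (s + 1) ⇑u ^ 2)) := by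
          gcongr
          exact sob_lower hd (s + 1) u
      _ = K * sobNorm (s + 1) ⇑u ^ 2 * b ^ 2 := by rw [hK]; ring
      _ ≤ ((K.toNNReal + 1 : ℝ≥0) : ℝ≥0∞) ^ 2 * sobNorm (s + 1) ⇑u ^ 2 * b ^ 2 := by gcongr
      _ = _ := by ring
  exact (ENNReal.pow_le_pow_left_iff (by norm_num)).mp hsq
end
end
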